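/- arXiv:1212.1377 — 2 statements merged into one kernel-verified Lean document; each statement's English description precedes it below -/
import Mathlib

section
/- In the antithetic Milstein setting, define the path averages X^c_ave = N^{−1} Σ_{n=0}^{N−1} (1/2)(X^c_n + X^c_{n+1}), X^f_ave = N^{−1} Σ_{n=0}^{N−1} (1/4)(X^f_n + 2X^f_{n+1/2} + X^f_{n+1}), and X^a_ave = N^{−1} Σ_{n=0}^{N−1} (1/4)(X^a_n + 2X^a_{n+1/2} + X^a_{n+1}) (these equal T^{−1}∫₀^T of the respective piecewise linear interpolants). Let P : ℝ^d → ℝ be twice continuously differentiable with uniformly bounded first and second derivatives. Then there exists a constant K, independent of N, such that for every N ≥ 1 (with Δt = T/N), E[ ( (1/2)(P(X^f_ave) + P(X^a_ave)) − P(X^c_ave) )² ] ≤ K · Δt². -/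
open MeasureTheory ProbabilityTheory

/-- `h_{ijk}(x) = ½ ∑_l g_{lj}(x) ∂g_{ik}/∂x_l (x)`. -/
noncomputable def milsteinH {d m : ℕ} (g : (Fin d → ℝ) → Fin d → Fin m → ℝ)
    (x : Fin d → ℝ) (i : Fin d) (j k : Fin m) : ℝ :=
  1 / 2 * ∑ l : Fin d, g x l j * fderiv ℝ (fun y => g y i k) x (Pi.single l 1)

/-- One step of the Milstein scheme with the Lévy areas omitted:
`x_i ↦ x_i + f_i(x) dt + ∑_j g_{ij}(x) dw_j + ∑_{j,k} h_{ijk}(x)(dw_j dw_k − δ_{jk} dt)`. -/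
noncomputable def milsteinStep {d m : ℕ} (f : (Fin d → ℝ) → Fin d → ℝ)
    (g : (Fin d → ℝ) → Fin d → Fin m → ℝ) (dt : ℝ)
    (x : Fin d → ℝ) (dw : Fin m → ℝ) : Fin d → ℝ :=
  fun i => x i + f x i * dt + (∑ j : Fin m, g x i j * dw j)
    + ∑ j : Fin m, ∑ k : Fin m,
        milsteinH g x i j k * (dw j * dw k - if j = k then dt else 0)

/-! Write `s ^ 2` for the fine timestep and measure the three coupled paths by the Lyapunov function
`V = s ^ 4 + ∑ i, ((xf + xa - 2 xc) ^ 2 + (xf - xc) ^ 4 + (xa - xc) ^ 4 + (s xc) ^ 4)`, so that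
with `v = V ^ (1/4)` the defect `xf + xa - 2 xc` is `O(v ^ 2)` while `xf - xc`, `xa - xc`, `s xc`
and `s` are `O(v)`. Over one coarse timestep `V` changes by a mean-zero term, linear in noise that
is independent of the past, plus a remainder `O(s ^ 2 * V)` up to a power of the normalised
increments. Hence `E V` grows by a factor `1 + K s ^ 2` only, and as `V = O(s ^ 4)` initially,
`E V = O(Δt ^ 2)` at all times. No moments other than those in `V` are needed, because they are
multiplied only by moments of the increments.

The remainder is this small because of the antithetic cancellation: the products of increments
arising from the order `w₁, w₂` and those from the order `w₂, w₁` have the products of the coarse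
increment `w₁ + w₂` as their mean, so the leading, second-order noise drops out of the defect.

The squared error of the estimator is in turn bounded, up to a constant, by the convex function
`‖xf + xa - 2 xc‖ ^ 2 + ‖xf - xa‖ ^ 4` of the averaged paths, and Jensen's inequality passes this
through the average over the grid. -/

open Asymptotics

/-- Scales in which errors are measured: a mesh scale `s`, an error scale `v` dominating `s`, and
a noise scale `z`. -/
structure ErrorGauge (ι : Type*) where
  s : ι → ℝ
  v : ι → ℝ
  z : ι → ℝ
  bound : ℝ
  s_pos : ∀ p, 0 < s p
  s_le_bound : ∀ p, s p ≤ bound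
  s_le_v : ∀ p, s p ≤ v p
  one_le_z : ∀ p, 1 ≤ z p

namespace ErrorGauge

/-- `X = O(s ^ a * v ^ b)` uniformly, up to a power of the noise scale. -/
def IsBigO {ι E : Type*} [NormedAddCommGroup E] (G : ErrorGauge ι) (X : ι → E) (a : ℤ) (b : ℕ) :
    Prop :=
  ∃ q : ℕ, X =O[⊤] fun p => G.s p ^ a * G.v p ^ b * G.z p ^ q

variable {ι κ E F : Type*} [NormedAddCommGroup E] [NormedAddCommGroup F] {G : ErrorGauge ι}

theorem v_pos (G : ErrorGauge ι) (p : ι) : 0 < G.v p := (G.s_pos p).trans_le (G.s_le_v p)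

theorem z_pos (G : ErrorGauge ι) (p : ι) : 0 < G.z p := one_pos.trans_le (G.one_le_z p)

theorem monomial_pos (G : ErrorGauge ι) (a : ℤ) (b q : ℕ) (p : ι) :
    0 < G.s p ^ a * G.v p ^ b * G.z p ^ q := by
  have := G.s_pos p
  have := G.v_pos p
  have := G.z_pos p
  positivity

namespace IsBigO

theorem exists_norm_le {X : ι → E} {a : ℤ} {b : ℕ} (hX : G.IsBigO X a b) :
    ∃ q : ℕ, ∃ K, 0 ≤ K ∧ ∀ p, ‖X p‖ ≤ K * (G.s p ^ a * G.v p ^ b * G.z p ^ q) := by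
  obtain ⟨q, hq⟩ := hX
  obtain ⟨K, hK, h⟩ := hq.exists_nonneg
  refine ⟨q, K, hK, fun p => ?_⟩
  simpa only [Real.norm_of_nonneg (G.monomial_pos a b q p).le] using isBigOWith_top.1 h p

theorem of_norm_le {X : ι → E} {Y : ι → F} {a : ℤ} {b : ℕ} (hY : G.IsBigO Y a b) (K : ℝ)
    (h : ∀ p, ‖X p‖ ≤ K * ‖Y p‖) : G.IsBigO X a b :=
  hY.imp fun _ hq => (IsBigO.of_bound K <| Filter.Eventually.of_forall h).trans hq

theorem congr {X Y : ι → E} {a : ℤ} {b : ℕ} (hX : G.IsBigO X a b) (h : ∀ p, X p = Y p) :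
    G.IsBigO Y a b :=
  funext h ▸ hX

theorem monomial_isBigO_of_le {q q' : ℕ} (a : ℤ) (b : ℕ) (h : q ≤ q') :
    (fun p => G.s p ^ a * G.v p ^ b * G.z p ^ q) =O[⊤]
      fun p => G.s p ^ a * G.v p ^ b * G.z p ^ q' :=
  .of_norm_le fun p => by
    rw [Real.norm_of_nonneg (G.monomial_pos a b q p).le]
    have := G.s_pos p
    have := G.v_pos p
    gcongr
    exact G.one_le_z p

theorem add {X Y : ι → E} {a : ℤ} {b : ℕ} (hX : G.IsBigO X a b) (hY : G.IsBigO Y a b) :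
    G.IsBigO (fun p => X p + Y p) a b := by
  obtain ⟨q, hX⟩ := hX
  obtain ⟨q', hY⟩ := hY
  exact ⟨max q q', (hX.trans (monomial_isBigO_of_le a b (le_max_left _ _))).add
    (hY.trans (monomial_isBigO_of_le a b (le_max_right _ _)))⟩

theorem neg {X : ι → E} {a : ℤ} {b : ℕ} (hX : G.IsBigO X a b) :
    G.IsBigO (fun p => -X p) a b :=
  hX.imp fun _ h => h.neg_left

theorem sub {X Y : ι → E} {a : ℤ} {b : ℕ} (hX : G.IsBigO X a b) (hY : G.IsBigO Y a b) :
    G.IsBigO (fun p => X p - Y p) a b := by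
  simpa only [sub_eq_add_neg] using hX.add hY.neg

theorem mul {R : Type*} [NormedRing R] {X Y : ι → R} {a a' : ℤ} {b b' : ℕ}
    (hX : G.IsBigO X a b) (hY : G.IsBigO Y a' b') :
    G.IsBigO (fun p => X p * Y p) (a + a') (b + b') := by
  obtain ⟨q, hX⟩ := hX
  obtain ⟨q', hY⟩ := hY
  refine ⟨q + q', (hX.mul hY).congr_right fun p => ?_⟩
  rw [zpow_add₀ (G.s_pos p).ne']
  ring

theorem norm {X : ι → E} {a : ℤ} {b : ℕ} (hX : G.IsBigO X a b) : G.IsBigO (fun p => ‖X p‖) a b :=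
  hX.imp fun _ h => h.norm_left

theorem smul [NormedSpace ℝ E] {r : ι → ℝ} {X : ι → E} {a a' : ℤ} {b b' : ℕ}
    (hr : G.IsBigO r a b) (hX : G.IsBigO X a' b') :
    G.IsBigO (fun p => r p • X p) (a + a') (b + b') :=
  (hr.mul hX.norm).of_norm_le 1 fun p => by
    rw [one_mul, norm_smul, norm_mul, norm_norm]

theorem const (e : E) : G.IsBigO (fun _ => e) 0 0 :=
  ⟨0, by simpa using isBigO_const_const e (one_ne_zero (α := ℝ)) ⊤⟩

theorem pow {R : Type*} [NormedRing R] {X : ι → R} {a : ℤ} {b : ℕ} (hX : G.IsBigO X a b) (n : ℕ) :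
    G.IsBigO (fun p => X p ^ n) (n * a) (n * b) := by
  induction n with
  | zero => simpa using const (1 : R)
  | succ n ih =>
    simpa only [pow_succ, Nat.cast_add_one, add_mul, one_mul] using ih.mul hX

theorem const_smul [NormedSpace ℝ E] (c : ℝ) {X : ι → E} {a : ℤ} {b : ℕ} (hX : G.IsBigO X a b) :
    G.IsBigO (fun p => c • X p) a b :=
  hX.imp fun _ h => h.const_smul_left c

theorem scale : G.IsBigO G.s 1 0 :=
  ⟨0, by simpa using isBigO_refl G.s ⊤⟩

theorem sum (t : Finset κ) {X : κ → ι → E} {a : ℤ} {b : ℕ} (hX : ∀ k, G.IsBigO (X k) a b) :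
    G.IsBigO (fun p => ∑ k ∈ t, X k p) a b := by
  induction t using Finset.cons_induction with
  | empty => exact ⟨0, by simpa using isBigO_zero (E' := E) (fun p => G.s p ^ a * G.v p ^ b) ⊤⟩
  | cons k t hk ih => simpa only [Finset.sum_cons] using (hX k).add ih

theorem weaken {X : ι → E} {a : ℤ} {b : ℕ} (hX : G.IsBigO X a b) (a' : ℤ) (b' : ℕ)
    (hb : b ≤ b') (hab : a' + b' ≤ a + b) : G.IsBigO X a' b' := by
  obtain ⟨q, hX⟩ := hX
  obtain ⟨k, rfl⟩ := Nat.exists_eq_add_of_le hb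
  obtain ⟨r, rfl⟩ : ∃ r : ℕ, a = a' + k + r := ⟨(a - a' - k).toNat, by push_cast at hab; omega⟩
  refine ⟨q, hX.trans <| .of_bound (G.bound ^ r) <| .of_forall fun p => ?_⟩
  have hs := G.s_pos p
  have hv := G.v_pos p
  have hz := G.z_pos p
  rw [Real.norm_of_nonneg (by positivity), Real.norm_of_nonneg (by positivity),
    zpow_add₀ hs.ne', zpow_add₀ hs.ne', zpow_natCast, zpow_natCast]
  calc G.s p ^ a' * G.s p ^ k * G.s p ^ r * G.v p ^ b * G.z p ^ q
      ≤ G.s p ^ a' * G.v p ^ k * G.bound ^ r * G.v p ^ b * G.z p ^ q := by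
        gcongr
        · exact G.s_le_v p
        · exact G.s_le_bound p
    _ = G.bound ^ r * (G.s p ^ a' * G.v p ^ (b + k) * G.z p ^ q) := by rw [pow_add]; ring

theorem pi [Fintype κ] {X : ι → κ → E} {a : ℤ} {b : ℕ}
    (hX : ∀ i, G.IsBigO (fun p => X p i) a b) : G.IsBigO X a b := by
  refine (sum Finset.univ fun i => (hX i).norm).of_norm_le 1 fun p => ?_
  have hnonneg : 0 ≤ ∑ i, ‖X p i‖ := Finset.sum_nonneg fun _ _ => norm_nonneg _
  rw [one_mul, Real.norm_of_nonneg hnonneg, pi_norm_le_iff_of_nonneg hnonneg]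
  exact fun i => Finset.single_le_sum (f := fun i => ‖X p i‖) (fun _ _ => norm_nonneg _)
    (Finset.mem_univ i)

theorem apply [Fintype κ] {X : ι → κ → E} {a : ℤ} {b : ℕ} (hX : G.IsBigO X a b) (i : κ) :
    G.IsBigO (fun p => X p i) a b :=
  hX.of_norm_le 1 fun p => by simpa only [one_mul] using norm_le_pi_norm (X p) i

theorem comp_of_scales_eq {X : ι → E} {a : ℤ} {b : ℕ} (hX : G.IsBigO X a b) {σ : ι → ι}
    (hs : ∀ p, G.s (σ p) = G.s p) (hv : ∀ p, G.v (σ p) = G.v p) (hz : ∀ p, G.z (σ p) = G.z p) :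
    G.IsBigO (fun p => X (σ p)) a b :=
  hX.imp fun q h => by
    simpa only [Function.comp_def, hs, hv, hz] using h.comp_tendsto (Filter.tendsto_top (f := σ))

theorem dotProduct_rows {n : Type*} [Fintype n] [Fintype κ] {A : ι → n → κ → ℝ} {ξ : ι → κ → ℝ}
    {a a' : ℤ} {b b' : ℕ} (hA : G.IsBigO A a b) (hξ : G.IsBigO ξ a' b') :
    G.IsBigO (fun p i => A p i ⬝ᵥ ξ p) (a + a') (b + b') :=
  pi fun i => sum _ fun k => ((hA.apply i).apply k).mul (hξ.apply k)

theorem scale_sq : G.IsBigO (fun p => G.s p ^ 2) 2 0 := scale.pow 2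

section Expansion

variable {R : Type*} [NormedCommRing R] {y B M : ι → R}

theorem sq_expansion (hy : G.IsBigO y 0 2) (hB : G.IsBigO B 2 2) (hM : G.IsBigO M 1 2) :
    G.IsBigO (fun p => (y p + B p + M p) ^ 2 - y p ^ 2 - 2 * y p * M p) 2 4 := by
  have hBM := (hB.weaken 1 2 (by norm_num) (by norm_num)).add hM
  have hyB := (hy.mul hB).add (hy.mul hB)
  exact (hyB.add (hBM.pow 2)).congr fun p => by ring

theorem pow_four_expansion (hy : G.IsBigO y 0 1) (hB : G.IsBigO B 2 1) (hM : G.IsBigO M 1 1) :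
    G.IsBigO (fun p => (y p + B p + M p) ^ 4 - y p ^ 4 - 4 * y p ^ 3 * M p) 2 4 := by
  have hBM := (hB.weaken 1 1 (by norm_num) (by norm_num)).add hM
  have h₁ := ((const (4 : R)).mul (hy.pow 3)).mul hB
  have h₂ := ((const (6 : R)).mul (hy.pow 2)).mul (hBM.pow 2)
  have h₃ := ((const (4 : R)).mul hy).mul (hBM.pow 3)
  have h₄ := hBM.pow 4
  exact (((h₁.add h₂).add (h₃.weaken 2 4 (by norm_num) (by norm_num))).add
    (h₄.weaken 2 4 (by norm_num) (by norm_num))).congr fun p => by ring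

end Expansion

end IsBigO

end ErrorGauge

/-- `φ` is twice continuously differentiable with first and second derivatives bounded by `C`. -/
structure BoundedC2 {E F : Type*} [NormedAddCommGroup E] [NormedSpace ℝ E] [NormedAddCommGroup F]
    [NormedSpace ℝ F] (φ : E → F) (C : ℝ) : Prop where
  contDiff : ContDiff ℝ 2 φ
  norm_fderiv_le : ∀ x, ‖fderiv ℝ φ x‖ ≤ C
  norm_iteratedFDeriv_two_le : ∀ x, ‖iteratedFDeriv ℝ 2 φ x‖ ≤ C

namespace BoundedC2

variable {E F : Type*} [NormedAddCommGroup E] [NormedSpace ℝ E] [NormedAddCommGroup F]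
  [NormedSpace ℝ F] {φ : E → F} {C : ℝ}

theorem nonneg (hφ : BoundedC2 φ C) : 0 ≤ C := (norm_nonneg _).trans (hφ.norm_fderiv_le 0)

theorem differentiable (hφ : BoundedC2 φ C) : Differentiable ℝ φ :=
  hφ.contDiff.differentiable two_ne_zero

theorem continuous (hφ : BoundedC2 φ C) : Continuous φ := hφ.contDiff.continuous

theorem continuous_fderiv (hφ : BoundedC2 φ C) : Continuous (fderiv ℝ φ) :=
  hφ.contDiff.continuous_fderiv two_ne_zero

theorem norm_sub_le (hφ : BoundedC2 φ C) (x y : E) : ‖φ y - φ x‖ ≤ C * ‖y - x‖ :=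
  convex_univ.norm_image_sub_le_of_norm_fderiv_le (𝕜 := ℝ) (fun z _ => hφ.differentiable z)
    (fun z _ => hφ.norm_fderiv_le z) (Set.mem_univ x) (Set.mem_univ y)

theorem norm_fderiv_sub_le (hφ : BoundedC2 φ C) (x y : E) :
    ‖fderiv ℝ φ y - fderiv ℝ φ x‖ ≤ C * ‖y - x‖ := by
  refine convex_univ.norm_image_sub_le_of_norm_fderiv_le (𝕜 := ℝ)
    (fun z _ => (hφ.contDiff.fderiv_right (m := 1) (by norm_num)).differentiable one_ne_zero z)
    (fun z _ => ?_) (Set.mem_univ x) (Set.mem_univ y)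
  rw [← norm_iteratedFDeriv_one, norm_iteratedFDeriv_fderiv]
  exact hφ.norm_iteratedFDeriv_two_le z

theorem norm_taylor_le (hφ : BoundedC2 φ C) (x y : E) :
    ‖φ y - φ x - fderiv ℝ φ x (y - x)‖ ≤ C * ‖y - x‖ ^ 2 := by
  have hC := hφ.nonneg
  refine ((convex_closedBall x ‖y - x‖).norm_image_sub_le_of_norm_fderiv_le' (𝕜 := ℝ)
    (φ := fderiv ℝ φ x) (C := C * ‖y - x‖) (fun z _ => hφ.differentiable z) (fun z hz => ?_)
    (Metric.mem_closedBall_self (norm_nonneg _)) (mem_closedBall_iff_norm.2 le_rfl)).trans_eq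
    (by ring)
  exact (hφ.norm_fderiv_sub_le x z).trans (by gcongr; exact mem_closedBall_iff_norm.1 hz)

theorem norm_antithetic_sub_le (hφ : BoundedC2 φ C) (a b c : E) :
    ‖φ a + φ b - (2 : ℝ) • φ c‖ ≤ C * (‖a + b - (2 : ℝ) • c‖ + ‖a - b‖ ^ 2) := by
  have hC := hφ.nonneg
  set x : E := (1 / 2 : ℝ) • (a + b) with hx
  have ha : a - x = (1 / 2 : ℝ) • (a - b) := by rw [hx]; module
  have hb : b - x = -((1 / 2 : ℝ) • (a - b)) := by rw [hx]; module
  have hc : x - c = (1 / 2 : ℝ) • (a + b - (2 : ℝ) • c) := by rw [hx]; module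
  have taylor_a := hφ.norm_taylor_le x a
  have taylor_b := hφ.norm_taylor_le x b
  have lip_c := hφ.norm_sub_le c x
  rw [ha] at taylor_a
  rw [hb, map_neg, norm_neg] at taylor_b
  rw [hc] at lip_c
  set L := fderiv ℝ φ x ((1 / 2 : ℝ) • (a - b))
  have hsplit : φ a + φ b - (2 : ℝ) • φ c
      = (φ a - φ x - L) + (φ b - φ x - -L) + (2 : ℝ) • (φ x - φ c) := by module
  have htri := norm_add₃_le (a := φ a - φ x - L) (b := φ b - φ x - -L) (c := (2 : ℝ) • (φ x - φ c))
  rw [norm_smul_of_nonneg (by norm_num)] at taylor_a taylor_b lip_c htri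
  rw [hsplit]
  have hquad : 0 ≤ C * ‖a - b‖ ^ 2 := by positivity
  rw [mul_pow] at taylor_a taylor_b
  linarith

section Gauge

variable {ι : Type*} {G : ErrorGauge ι} {x y u c : ι → E}

theorem isBigO_sub (hφ : BoundedC2 φ C) {a : ℤ} {b : ℕ}
    (h : G.IsBigO (fun p => y p - x p) a b) : G.IsBigO (fun p => φ (y p) - φ (x p)) a b :=
  h.of_norm_le C fun _ => hφ.norm_sub_le _ _

theorem isBigO_comp (hφ : BoundedC2 φ C) (h : G.IsBigO x (-1) 1) :
    G.IsBigO (fun p => φ (x p)) (-1) 1 := by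
  have hsub := hφ.isBigO_sub (x := fun _ => 0) (y := x) (h.congr fun p => (sub_zero _).symm)
  have hzero := (ErrorGauge.IsBigO.const (G := G) (φ 0)).weaken (-1) 1 (by norm_num) (by norm_num)
  exact (hsub.add hzero).congr fun p => sub_add_cancel _ _

theorem isBigO_fderiv_apply (hφ : BoundedC2 φ C) {a : ℤ} {b : ℕ} (x : ι → E)
    (hu : G.IsBigO u a b) : G.IsBigO (fun p => fderiv ℝ φ (x p) (u p)) a b :=
  hu.of_norm_le C fun p => (fderiv ℝ φ (x p)).le_of_opNorm_le (hφ.norm_fderiv_le _) _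

theorem isBigO_fderiv_sub_apply (hφ : BoundedC2 φ C) {a a' : ℤ} {b b' : ℕ}
    (h : G.IsBigO (fun p => y p - x p) a b) (hu : G.IsBigO u a' b') :
    G.IsBigO (fun p => fderiv ℝ φ (y p) (u p) - fderiv ℝ φ (x p) (u p)) (a + a') (b + b') := by
  refine (h.norm.smul hu).of_norm_le C fun p => ?_
  rw [← sub_apply, norm_smul, norm_norm, ← mul_assoc]
  exact (fderiv ℝ φ (y p) - fderiv ℝ φ (x p)).le_of_opNorm_le (hφ.norm_fderiv_sub_le _ _) _

theorem isBigO_taylor (hφ : BoundedC2 φ C) {a : ℤ} {b : ℕ}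
    (h : G.IsBigO (fun p => y p - x p) a b) :
    G.IsBigO (fun p => φ (y p) - φ (x p) - fderiv ℝ φ (x p) (y p - x p)) (2 * a) (2 * b) :=
  (h.norm.pow 2).of_norm_le C fun p => by
    rw [norm_pow, norm_norm]
    exact hφ.norm_taylor_le _ _

theorem isBigO_antithetic_sub (hφ : BoundedC2 φ C)
    (h : G.IsBigO (fun p => x p - y p) 0 1)
    (hmid : G.IsBigO (fun p => x p + y p - (2 : ℝ) • c p) 0 2) :
    G.IsBigO (fun p => φ (x p) + φ (y p) - (2 : ℝ) • φ (c p)) 0 2 :=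
  (hmid.norm.add (h.norm.pow 2)).of_norm_le C fun p => by
    rw [Real.norm_of_nonneg (by positivity)]
    exact hφ.norm_antithetic_sub_le _ _ _

end Gauge

end BoundedC2

section Scheme

variable {d m : ℕ} {f : (Fin d → ℝ) → Fin d → ℝ} {g : (Fin d → ℝ) → Fin d → Fin m → ℝ}

/-- The derivative of `φ` at `x` along the `j`-th column of the diffusion coefficient `g`. -/
noncomputable def diffusionDeriv {F : Type*} [NormedAddCommGroup F] [NormedSpace ℝ F]
    (φ : (Fin d → ℝ) → F) (g : (Fin d → ℝ) → Fin d → Fin m → ℝ) (x : Fin d → ℝ) (j : Fin m) : F :=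
  fderiv ℝ φ x fun l => g x l j

/-- The coefficients `h_{ijk}` of the Milstein scheme, with the pair `(j, k)` as a single index. -/
noncomputable def milsteinTensor (g : (Fin d → ℝ) → Fin d → Fin m → ℝ) (x : Fin d → ℝ) (i : Fin d)
    (jk : Fin m × Fin m) : ℝ :=
  2⁻¹ * diffusionDeriv g g x jk.1 i jk.2

/-- The products `w_j w_k - δ_{jk} dt` of centred increments over a timestep `dt`. -/
def quadraticIncrement (dt : ℝ) (w : Fin m → ℝ) (jk : Fin m × Fin m) : ℝ :=
  w jk.1 * w jk.2 - if jk.1 = jk.2 then dt else 0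

/-- The mean-zero part of a Milstein step from `x` with increment `w`. -/
noncomputable def milsteinNoise (g : (Fin d → ℝ) → Fin d → Fin m → ℝ) (dt : ℝ) (x : Fin d → ℝ)
    (w : Fin m → ℝ) : Fin d → ℝ :=
  fun i => g x i ⬝ᵥ w + milsteinTensor g x i ⬝ᵥ quadraticIncrement dt w

theorem fderiv_apply_diffusion {F : Type*} [NormedAddCommGroup F] [NormedSpace ℝ F]
    (φ : (Fin d → ℝ) → F) (g : (Fin d → ℝ) → Fin d → Fin m → ℝ) (x : Fin d → ℝ) (w : Fin m → ℝ) :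
    fderiv ℝ φ x (fun l => g x l ⬝ᵥ w) = ∑ j, w j • diffusionDeriv φ g x j := by
  have hcolumns : (fun l => g x l ⬝ᵥ w) = ∑ j, w j • fun l => g x l j := by
    ext l
    simp only [dotProduct, Finset.sum_apply, Pi.smul_apply, smul_eq_mul, mul_comm]
  rw [hcolumns, map_sum]
  simp only [map_smul, diffusionDeriv]

theorem milsteinH_eq_milsteinTensor (hg : Differentiable ℝ g) (x : Fin d → ℝ) (i : Fin d)
    (j k : Fin m) : milsteinH g x i j k = milsteinTensor g x i (j, k) := by
  have hentry : ∀ u, fderiv ℝ (fun y => g y i k) x u = fderiv ℝ g x u i k := fun u => by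
    rw [(hasFDerivAt_pi'.1 (hasFDerivAt_pi'.1 (hg x).hasFDerivAt i) k).fderiv]
    rfl
  have hbasis := pi_eq_sum_univ' fun l => g x l j
  rw [milsteinH, milsteinTensor, diffusionDeriv, hbasis, map_sum, one_div]
  simp only [hentry, map_smul, Finset.sum_apply, Pi.smul_apply, smul_eq_mul]

theorem milsteinStep_eq (hg : Differentiable ℝ g) (f : (Fin d → ℝ) → Fin d → ℝ) (dt : ℝ)
    (x : Fin d → ℝ) (w : Fin m → ℝ) :
    milsteinStep f g dt x w = x + dt • f x + milsteinNoise g dt x w := by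
  ext i
  simp only [milsteinStep, milsteinNoise, milsteinH_eq_milsteinTensor hg, dotProduct,
    quadraticIncrement, Fintype.sum_prod_type, Pi.add_apply, Pi.smul_apply, smul_eq_mul]
  ring

/-- The drift of two fine steps of size `dt` from `x`, the first one with increment `w₁`; the
linear part of the second drift, which has mean zero, is left to `fineNoise`. -/
noncomputable def fineDrift (f : (Fin d → ℝ) → Fin d → ℝ) (g : (Fin d → ℝ) → Fin d → Fin m → ℝ)
    (dt : ℝ) (x : Fin d → ℝ) (w₁ : Fin m → ℝ) : Fin d → ℝ :=
  dt • (f x + (f (milsteinStep f g dt x w₁) - fderiv ℝ f x fun l => g x l ⬝ᵥ w₁))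

/-- The mean-zero part of two fine steps of size `dt` from `x` with increments `w₁` and `w₂`. -/
noncomputable def fineNoise (f : (Fin d → ℝ) → Fin d → ℝ) (g : (Fin d → ℝ) → Fin d → Fin m → ℝ)
    (dt : ℝ) (x : Fin d → ℝ) (w₁ w₂ : Fin m → ℝ) : Fin d → ℝ :=
  milsteinNoise g dt x w₁ + milsteinNoise g dt (milsteinStep f g dt x w₁) w₂
    + dt • fderiv ℝ f x fun l => g x l ⬝ᵥ w₁

theorem milsteinStep_milsteinStep (hg : Differentiable ℝ g) (f : (Fin d → ℝ) → Fin d → ℝ)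
    (dt : ℝ) (x : Fin d → ℝ) (w₁ w₂ : Fin m → ℝ) :
    milsteinStep f g dt (milsteinStep f g dt x w₁) w₂
      = x + fineDrift f g dt x w₁ + fineNoise f g dt x w₁ w₂ := by
  rw [milsteinStep_eq hg f dt (milsteinStep f g dt x w₁), fineDrift, fineNoise]
  nth_rw 1 [milsteinStep_eq hg f dt x w₁]
  module

/-- The iterated increments `2 ∫∫ dW_j dW_k` over two steps, with both Lévy areas omitted. -/
def twoStepIncrement (dt : ℝ) (w₁ w₂ : Fin m → ℝ) (jk : Fin m × Fin m) : ℝ :=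
  quadraticIncrement dt w₁ jk + quadraticIncrement dt w₂ jk + 2 * (w₁ jk.1 * w₂ jk.2)

/-- The leading part of `fineNoise`, obtained by freezing the coefficients at `x`. -/
noncomputable def frozenNoise (g : (Fin d → ℝ) → Fin d → Fin m → ℝ) (dt : ℝ) (x : Fin d → ℝ)
    (w₁ w₂ : Fin m → ℝ) : Fin d → ℝ :=
  fun i => g x i ⬝ᵥ (w₁ + w₂) + milsteinTensor g x i ⬝ᵥ twoStepIncrement dt w₁ w₂

theorem twoStepIncrement_add_swap (dt : ℝ) (w₁ w₂ : Fin m → ℝ) :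
    twoStepIncrement dt w₁ w₂ + twoStepIncrement dt w₂ w₁
      = (2 : ℝ) • quadraticIncrement (2 * dt) (w₁ + w₂) := by
  ext jk
  simp only [twoStepIncrement, quadraticIncrement, Pi.add_apply, Pi.smul_apply, smul_eq_mul]
  split_ifs <;> ring

theorem fderiv_apply_diffusion_dotProduct (g : (Fin d → ℝ) → Fin d → Fin m → ℝ) (x : Fin d → ℝ)
    (w₁ w₂ : Fin m → ℝ) (i : Fin d) :
    (fderiv ℝ g x fun l => g x l ⬝ᵥ w₁) i ⬝ᵥ w₂
      = milsteinTensor g x i ⬝ᵥ fun jk => 2 * (w₁ jk.1 * w₂ jk.2) := by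
  rw [fderiv_apply_diffusion]
  simp only [dotProduct, milsteinTensor, Fintype.sum_prod_type, Finset.sum_apply, Pi.smul_apply,
    smul_eq_mul, Finset.sum_mul]
  rw [Finset.sum_comm]
  exact Finset.sum_congr rfl fun j _ => Finset.sum_congr rfl fun k _ => by ring

theorem fineNoise_sub_frozenNoise (f : (Fin d → ℝ) → Fin d → ℝ)
    (g : (Fin d → ℝ) → Fin d → Fin m → ℝ) (dt : ℝ) (x : Fin d → ℝ) (w₁ w₂ : Fin m → ℝ) :
    fineNoise f g dt x w₁ w₂ - frozenNoise g dt x w₁ w₂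
      = (fun i => (g (milsteinStep f g dt x w₁) - g x - fderiv ℝ g x fun l => g x l ⬝ᵥ w₁) i ⬝ᵥ w₂)
        + (fun i => (milsteinTensor g (milsteinStep f g dt x w₁) - milsteinTensor g x) i ⬝ᵥ
            quadraticIncrement dt w₂)
        + dt • fderiv ℝ f x fun l => g x l ⬝ᵥ w₁ := by
  have hsplit : twoStepIncrement dt w₁ w₂ = quadraticIncrement dt w₁ + quadraticIncrement dt w₂
      + fun jk => 2 * (w₁ jk.1 * w₂ jk.2) := rfl
  ext i
  simp only [fineNoise, frozenNoise, milsteinNoise, hsplit, Pi.add_apply, Pi.sub_apply,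
    dotProduct_add, sub_dotProduct, fderiv_apply_diffusion_dotProduct]
  ring

/-- The antithetic cancellation: exchanging the two increments in one of the two frozen noises
symmetrises the iterated increments, which is what the coarse step sees. -/
theorem frozenNoise_add_swap_sub (g : (Fin d → ℝ) → Fin d → Fin m → ℝ) (dt : ℝ)
    (x y c : Fin d → ℝ) (w₁ w₂ : Fin m → ℝ) :
    frozenNoise g dt x w₁ w₂ + frozenNoise g dt y w₂ w₁
        - (2 : ℝ) • milsteinNoise g (2 * dt) c (w₁ + w₂)
      = (fun i => (g x + g y - (2 : ℝ) • g c) i ⬝ᵥ (w₁ + w₂))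
        + (fun i => (milsteinTensor g x - milsteinTensor g c) i ⬝ᵥ twoStepIncrement dt w₁ w₂)
        + (fun i => (milsteinTensor g y - milsteinTensor g c) i ⬝ᵥ twoStepIncrement dt w₂ w₁) := by
  ext i
  have hswap := congrArg (milsteinTensor g c i ⬝ᵥ ·) (twoStepIncrement_add_swap dt w₁ w₂)
  simp only [dotProduct_add, dotProduct_smul, smul_eq_mul] at hswap
  simp only [frozenNoise, milsteinNoise, Pi.add_apply, Pi.sub_apply, Pi.smul_apply, smul_eq_mul,
    sub_dotProduct, add_dotProduct, smul_dotProduct, add_comm w₂ w₁]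
  linear_combination hswap

end Scheme

section LocalExpansion

open ErrorGauge

variable {ι : Type*} {G : ErrorGauge ι} {d m : ℕ} {f : (Fin d → ℝ) → Fin d → ℝ}
  {g : (Fin d → ℝ) → Fin d → Fin m → ℝ} {Cf Cg : ℝ}
  {x y c : ι → Fin d → ℝ} {w w₁ w₂ : ι → Fin m → ℝ}

theorem BoundedC2.isBigO_column (hg : BoundedC2 g Cg) (hx : G.IsBigO x (-1) 1) (j : Fin m) :
    G.IsBigO (fun p l => g (x p) l j) (-1) 1 :=
  .pi fun l => ((hg.isBigO_comp hx).apply l).apply j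

theorem BoundedC2.isBigO_milsteinTensor (hg : BoundedC2 g Cg) (hx : G.IsBigO x (-1) 1) :
    G.IsBigO (fun p => milsteinTensor g (x p)) (-1) 1 :=
  .pi fun i => .pi fun jk => .const_smul 2⁻¹ <|
    ((hg.isBigO_fderiv_apply x (hg.isBigO_column hx jk.1)).apply i).apply jk.2

theorem BoundedC2.isBigO_diffusionDeriv_sub (hg : BoundedC2 g Cg) (hx : G.IsBigO x (-1) 1)
    (hyx : G.IsBigO (fun p => y p - x p) 0 1) (j : Fin m) :
    G.IsBigO (fun p => diffusionDeriv g g (y p) j - diffusionDeriv g g (x p) j) (-1) 2 := by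
  have hcolumn_sub : G.IsBigO (fun p l => (g (y p) - g (x p)) l j) 0 1 :=
    .pi fun l => ((hg.isBigO_sub hyx).apply l).apply j
  have hcolumn := (hg.isBigO_fderiv_apply y hcolumn_sub).weaken (-1) 2 (by norm_num) (by norm_num)
  refine (hcolumn.add (hg.isBigO_fderiv_sub_apply hyx (hg.isBigO_column hx j))).congr fun p => ?_
  have hmap := map_sub (fderiv ℝ g (y p)) (fun l => g (y p) l j) fun l => g (x p) l j
  exact (congrArg (· + _) hmap).trans (sub_add_sub_cancel _ _ _)

theorem BoundedC2.isBigO_milsteinTensor_sub (hg : BoundedC2 g Cg) (hx : G.IsBigO x (-1) 1)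
    (hyx : G.IsBigO (fun p => y p - x p) 0 1) :
    G.IsBigO (fun p => milsteinTensor g (y p) - milsteinTensor g (x p)) (-1) 2 :=
  .pi fun i => .pi fun jk => .congr
    (((hg.isBigO_diffusionDeriv_sub hx hyx jk.1).apply i).apply jk.2 |>.const_smul 2⁻¹)
    fun _ => mul_sub _ _ _

theorem isBigO_quadraticIncrement (hw : G.IsBigO w 1 0) (r : ℝ) :
    G.IsBigO (fun p => quadraticIncrement (r * G.s p ^ 2) (w p)) 2 0 :=
  .pi fun jk => ((hw.apply jk.1).mul (hw.apply jk.2)).sub <|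
    (IsBigO.scale_sq.const_smul (if jk.1 = jk.2 then r else 0)).congr fun p => by
      rw [smul_eq_mul, ite_mul, zero_mul]

theorem isBigO_quadraticIncrement_one (hw : G.IsBigO w 1 0) :
    G.IsBigO (fun p => quadraticIncrement (G.s p ^ 2) (w p)) 2 0 := by
  simpa only [one_mul] using isBigO_quadraticIncrement hw 1

theorem isBigO_twoStepIncrement (hw₁ : G.IsBigO w₁ 1 0) (hw₂ : G.IsBigO w₂ 1 0) :
    G.IsBigO (fun p => twoStepIncrement (G.s p ^ 2) (w₁ p) (w₂ p)) 2 0 :=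
  ((isBigO_quadraticIncrement_one hw₁).add (isBigO_quadraticIncrement_one hw₂)).add <|
    .pi fun jk => ((hw₁.apply jk.1).mul (hw₂.apply jk.2)).const_smul 2

theorem BoundedC2.isBigO_diffusion (hg : BoundedC2 g Cg) (hx : G.IsBigO x (-1) 1)
    (hw : G.IsBigO w 1 0) : G.IsBigO (fun p l => g (x p) l ⬝ᵥ w p) 0 1 :=
  (hg.isBigO_comp hx).dotProduct_rows hw

theorem BoundedC2.isBigO_quadraticNoise (hg : BoundedC2 g Cg) (hx : G.IsBigO x (-1) 1)
    {q : ι → Fin m × Fin m → ℝ} (hq : G.IsBigO q 2 0) :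
    G.IsBigO (fun p i => milsteinTensor g (x p) i ⬝ᵥ q p) 1 1 :=
  (hg.isBigO_milsteinTensor hx).dotProduct_rows hq

theorem BoundedC2.isBigO_milsteinNoise (hg : BoundedC2 g Cg) (hx : G.IsBigO x (-1) 1)
    (hw : G.IsBigO w 1 0) (r : ℝ) :
    G.IsBigO (fun p => milsteinNoise g (r * G.s p ^ 2) (x p) (w p)) 0 1 :=
  (hg.isBigO_diffusion hx hw).add <|
    (hg.isBigO_quadraticNoise hx (isBigO_quadraticIncrement hw r)).weaken 0 1 (by norm_num)
      (by norm_num)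

theorem BoundedC2.isBigO_drift (hf : BoundedC2 f Cf) (hx : G.IsBigO x (-1) 1) (r : ℝ) :
    G.IsBigO (fun p => (r * G.s p ^ 2) • f (x p)) 1 1 :=
  (IsBigO.scale_sq.const_smul r).smul (hf.isBigO_comp hx)

section Step

variable (hf : BoundedC2 f Cf) (hg : BoundedC2 g Cg)
include hf hg

theorem isBigO_milsteinStep_sub_euler (hx : G.IsBigO x (-1) 1) (hw : G.IsBigO w 1 0) (r : ℝ) :
    G.IsBigO (fun p => milsteinStep f g (r * G.s p ^ 2) (x p) (w p) - x p
      - fun l => g (x p) l ⬝ᵥ w p) 1 1 :=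
  ((hf.isBigO_drift hx r).add
    (hg.isBigO_quadraticNoise hx (isBigO_quadraticIncrement hw r))).congr fun p => by
      rw [milsteinStep_eq hg.differentiable]
      ext i
      simp only [milsteinNoise, Pi.add_apply, Pi.sub_apply]
      ring

theorem isBigO_milsteinStep_sub_euler_one (hx : G.IsBigO x (-1) 1) (hw : G.IsBigO w 1 0) :
    G.IsBigO (fun p => milsteinStep f g (G.s p ^ 2) (x p) (w p) - x p
      - fun l => g (x p) l ⬝ᵥ w p) 1 1 := by
  simpa only [one_mul] using isBigO_milsteinStep_sub_euler hf hg hx hw 1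

theorem isBigO_milsteinStep_sub (hx : G.IsBigO x (-1) 1) (hw : G.IsBigO w 1 0) :
    G.IsBigO (fun p => milsteinStep f g (G.s p ^ 2) (x p) (w p) - x p) 0 1 :=
  (((isBigO_milsteinStep_sub_euler_one hf hg hx hw).weaken 0 1 (by norm_num) (by norm_num)).add
    (hg.isBigO_diffusion hx hw)).congr fun _ => sub_add_cancel _ _

theorem isBigO_milsteinStep (hx : G.IsBigO x (-1) 1) (hw : G.IsBigO w 1 0) :
    G.IsBigO (fun p => milsteinStep f g (G.s p ^ 2) (x p) (w p)) (-1) 1 :=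
  (((isBigO_milsteinStep_sub hf hg hx hw).weaken (-1) 1 (by norm_num) (by norm_num)).add
    hx).congr fun _ => sub_add_cancel _ _

theorem isBigO_comp_milsteinStep_sub_euler {F : Type*} [NormedAddCommGroup F] [NormedSpace ℝ F]
    {φ : (Fin d → ℝ) → F} {C : ℝ} (hφ : BoundedC2 φ C) (hx : G.IsBigO x (-1) 1)
    (hw : G.IsBigO w 1 0) :
    G.IsBigO (fun p => φ (milsteinStep f g (G.s p ^ 2) (x p) (w p)) - φ (x p)
      - fderiv ℝ φ (x p) fun l => g (x p) l ⬝ᵥ w p) 0 2 := by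
  have htaylor := hφ.isBigO_taylor (isBigO_milsteinStep_sub hf hg hx hw)
  have heuler :=
    (hφ.isBigO_fderiv_apply x (isBigO_milsteinStep_sub_euler_one hf hg hx hw)).weaken 0 2
      (by norm_num) (by norm_num)
  exact (htaylor.add heuler).congr fun p => by
    rw [map_sub (fderiv ℝ φ (x p)) (_ - _)]
    abel

theorem isBigO_fineDrift_sub (hx : G.IsBigO x (-1) 1)
    (hxc : G.IsBigO (fun p => x p - c p) 0 1) (hw : G.IsBigO w 1 0) :
    G.IsBigO (fun p => fineDrift f g (G.s p ^ 2) (x p) (w p) - (2 * G.s p ^ 2) • f (c p)) 2 1 := by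
  have hstep : G.IsBigO (fun p => milsteinStep f g (G.s p ^ 2) (x p) (w p) - c p) 0 1 :=
    ((isBigO_milsteinStep_sub hf hg hx hw).add hxc).congr fun _ => sub_add_sub_cancel _ _ _
  have hlinear := hf.isBigO_fderiv_apply x (hg.isBigO_diffusion hx hw)
  refine (IsBigO.scale_sq.smul
    (((hf.isBigO_sub hxc).add (hf.isBigO_sub hstep)).sub hlinear)).congr fun p => ?_
  rw [fineDrift]
  module

theorem isBigO_fineNoise_sub (hx : G.IsBigO x (-1) 1) (hc : G.IsBigO c (-1) 1)
    (hxc : G.IsBigO (fun p => x p - c p) 0 1) (hw₁ : G.IsBigO w₁ 1 0) (hw₂ : G.IsBigO w₂ 1 0) :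
    G.IsBigO (fun p => fineNoise f g (G.s p ^ 2) (x p) (w₁ p) (w₂ p)
      - milsteinNoise g (2 * G.s p ^ 2) (c p) (w₁ p + w₂ p)) 1 1 := by
  have hstep := isBigO_milsteinStep hf hg hx hw₁
  have hstep_sub : G.IsBigO (fun p => milsteinStep f g (G.s p ^ 2) (x p) (w₁ p) - c p) 0 1 :=
    ((isBigO_milsteinStep_sub hf hg hx hw₁).add hxc).congr fun _ => sub_add_sub_cancel _ _ _
  have hlinear₁ := (hg.isBigO_sub hxc).dotProduct_rows hw₁
  have hlinear₂ := (hg.isBigO_sub hstep_sub).dotProduct_rows hw₂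
  have hquad₁ := hg.isBigO_quadraticNoise hx (isBigO_quadraticIncrement_one hw₁)
  have hquad₂ := hg.isBigO_quadraticNoise hstep (isBigO_quadraticIncrement_one hw₂)
  have hquad := hg.isBigO_quadraticNoise hc (isBigO_quadraticIncrement (hw₁.add hw₂) 2)
  have hdrift := (IsBigO.scale_sq.smul
    (hf.isBigO_fderiv_apply x (hg.isBigO_diffusion hx hw₁))).weaken 1 1 (by norm_num) (by norm_num)
  refine (((hlinear₁.add hlinear₂).add ((hquad₁.add hquad₂).sub hquad)).add hdrift).congr
    fun p => ?_
  ext i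
  simp only [fineNoise, milsteinNoise, Pi.add_apply, Pi.sub_apply, sub_dotProduct, dotProduct_add]
  ring

theorem isBigO_fineNoise_sub_frozenNoise (hx : G.IsBigO x (-1) 1) (hw₁ : G.IsBigO w₁ 1 0)
    (hw₂ : G.IsBigO w₂ 1 0) :
    G.IsBigO (fun p => fineNoise f g (G.s p ^ 2) (x p) (w₁ p) (w₂ p)
      - frozenNoise g (G.s p ^ 2) (x p) (w₁ p) (w₂ p)) 1 2 := by
  simp only [fineNoise_sub_frozenNoise]
  have hlinear := (isBigO_comp_milsteinStep_sub_euler hf hg hg hx hw₁).dotProduct_rows hw₂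
  have hquad := (hg.isBigO_milsteinTensor_sub hx
    (isBigO_milsteinStep_sub hf hg hx hw₁)).dotProduct_rows (isBigO_quadraticIncrement_one hw₂)
  have hdrift := (IsBigO.scale_sq.smul
    (hf.isBigO_fderiv_apply x (hg.isBigO_diffusion hx hw₁))).weaken 1 2 (by norm_num) (by norm_num)
  exact (hlinear.add hquad).add hdrift

variable (hx : G.IsBigO x (-1) 1) (hy : G.IsBigO y (-1) 1) (hc : G.IsBigO c (-1) 1)
  (hxc : G.IsBigO (fun p => x p - c p) 0 1) (hyc : G.IsBigO (fun p => y p - c p) 0 1)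
  (hmid : G.IsBigO (fun p => x p + y p - (2 : ℝ) • c p) 0 2)
  (hw₁ : G.IsBigO w₁ 1 0) (hw₂ : G.IsBigO w₂ 1 0)

include hx hy hxc hyc hmid hw₁ hw₂

theorem isBigO_fineDrift_antithetic :
    G.IsBigO (fun p => fineDrift f g (G.s p ^ 2) (x p) (w₁ p)
      + fineDrift f g (G.s p ^ 2) (y p) (w₂ p) - (2 : ℝ) • (2 * G.s p ^ 2) • f (c p)) 2 2 := by
  have hxy : G.IsBigO (fun p => x p - y p) 0 1 :=
    (hxc.sub hyc).congr fun _ => sub_sub_sub_cancel_right _ _ _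
  have hmiddle := hf.isBigO_antithetic_sub hxy hmid
  have hstep₁ := isBigO_comp_milsteinStep_sub_euler hf hg hf hx hw₁
  have hstep₂ := isBigO_comp_milsteinStep_sub_euler hf hg hf hy hw₂
  refine (IsBigO.scale_sq.smul (((hmiddle.add hmiddle).add hstep₁).add hstep₂)).congr fun p => ?_
  simp only [fineDrift]
  module

include hc in
theorem isBigO_fineNoise_antithetic :
    G.IsBigO (fun p => fineNoise f g (G.s p ^ 2) (x p) (w₁ p) (w₂ p)
      + fineNoise f g (G.s p ^ 2) (y p) (w₂ p) (w₁ p)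
      - (2 : ℝ) • milsteinNoise g (2 * G.s p ^ 2) (c p) (w₁ p + w₂ p)) 1 2 := by
  have hxy : G.IsBigO (fun p => x p - y p) 0 1 :=
    (hxc.sub hyc).congr fun _ => sub_sub_sub_cancel_right _ _ _
  have hlinear := (hg.isBigO_antithetic_sub hxy hmid).dotProduct_rows (hw₁.add hw₂)
  have hquad₁ := (hg.isBigO_milsteinTensor_sub hc hxc).dotProduct_rows
    (isBigO_twoStepIncrement hw₁ hw₂)
  have hquad₂ := (hg.isBigO_milsteinTensor_sub hc hyc).dotProduct_rows
    (isBigO_twoStepIncrement hw₂ hw₁)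
  have hfrozen : G.IsBigO (fun p => frozenNoise g (G.s p ^ 2) (x p) (w₁ p) (w₂ p)
      + frozenNoise g (G.s p ^ 2) (y p) (w₂ p) (w₁ p)
      - (2 : ℝ) • milsteinNoise g (2 * G.s p ^ 2) (c p) (w₁ p + w₂ p)) 1 2 := by
    simp only [frozenNoise_add_swap_sub]
    exact (hlinear.add hquad₁).add hquad₂
  refine ((hfrozen.add (isBigO_fineNoise_sub_frozenNoise hf hg hx hw₁ hw₂)).add
    (isBigO_fineNoise_sub_frozenNoise hf hg hy hw₂ hw₁)).congr fun p => ?_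
  module

end Step

end LocalExpansion

section Lyapunov

variable {d m : ℕ}

/-- The Lyapunov function of the antithetic coupling of a fine path `xf`, its antithetic twin `xa`
and the coarse path `xc`, for fine timesteps `s ^ 2`. -/
def lyapunov (s : ℝ) (xf xa xc : Fin d → ℝ) : ℝ :=
  s ^ 4 + ∑ i, ((xf + xa - (2 : ℝ) • xc) ^ 2 + (xf - xc) ^ 4 + (xa - xc) ^ 4 + (s • xc) ^ 4) i

theorem lyapunov_swap (s : ℝ) (xf xa xc : Fin d → ℝ) :
    lyapunov s xa xf xc = lyapunov s xf xa xc := by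
  simp only [lyapunov, add_comm xa xf, add_right_comm _ ((xa - xc) ^ 4)]

theorem pi_norm_pow_le_sum_of_even {κ : Type*} [Fintype κ] (x : κ → ℝ) {k : ℕ} (hk : Even k)
    (hk₀ : k ≠ 0) : ‖x‖ ^ k ≤ ∑ i, x i ^ k := by
  obtain hκ | hκ := isEmpty_or_nonempty κ
  · simp [Subsingleton.elim x 0, hk₀]
  obtain ⟨i, hi⟩ := Finite.exists_max fun i => ‖x i‖
  have hnorm : ‖x‖ ≤ ‖x i‖ := (pi_norm_le_iff_of_nonneg (norm_nonneg _)).2 hi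
  calc ‖x‖ ^ k ≤ ‖x i‖ ^ k := by gcongr
    _ = x i ^ k := by rw [Real.norm_eq_abs, hk.pow_abs]
    _ ≤ ∑ i, x i ^ k :=
      Finset.single_le_sum (f := fun i => x i ^ k) (fun _ _ => hk.pow_nonneg _) (Finset.mem_univ i)

theorem sum_norm_pow_le_lyapunov (s : ℝ) (xf xa xc : Fin d → ℝ) :
    s ^ 4 + (‖xf + xa - (2 : ℝ) • xc‖ ^ 2 + ‖xf - xc‖ ^ 4 + ‖xa - xc‖ ^ 4 + ‖s • xc‖ ^ 4)
      ≤ lyapunov s xf xa xc := by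
  simp only [lyapunov, Pi.add_apply, Pi.pow_apply, Finset.sum_add_distrib]
  gcongr <;> exact pi_norm_pow_le_sum_of_even _ (by decide) (by decide)

theorem pow_four_le_lyapunov (s : ℝ) (xf xa xc : Fin d → ℝ) : s ^ 4 ≤ lyapunov s xf xa xc :=
  (le_add_of_nonneg_right (by positivity)).trans (sum_norm_pow_le_lyapunov s xf xa xc)

theorem norm_antithetic_sq_le_lyapunov (s : ℝ) (xf xa xc : Fin d → ℝ) :
    ‖xf + xa - (2 : ℝ) • xc‖ ^ 2 ≤ lyapunov s xf xa xc := by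
  refine le_trans ?_ (sum_norm_pow_le_lyapunov s xf xa xc)
  simp only [add_assoc]
  exact le_add_of_nonneg_of_le (by positivity) (le_add_of_nonneg_right (by positivity))

theorem norm_fine_sub_coarse_pow_le_lyapunov (s : ℝ) (xf xa xc : Fin d → ℝ) :
    ‖xf - xc‖ ^ 4 ≤ lyapunov s xf xa xc := by
  refine le_trans ?_ (sum_norm_pow_le_lyapunov s xf xa xc)
  have hmean := sq_nonneg ‖xf + xa - (2 : ℝ) • xc‖
  have hrest : 0 ≤ s ^ 4 + (‖xa - xc‖ ^ 4 + ‖s • xc‖ ^ 4) := by positivity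
  linarith

theorem norm_antithetic_sub_coarse_pow_le_lyapunov (s : ℝ) (xf xa xc : Fin d → ℝ) :
    ‖xa - xc‖ ^ 4 ≤ lyapunov s xf xa xc :=
  (norm_fine_sub_coarse_pow_le_lyapunov s xa xf xc).trans_eq (lyapunov_swap s xf xa xc)

theorem norm_scaled_coarse_pow_le_lyapunov (s : ℝ) (xf xa xc : Fin d → ℝ) :
    ‖s • xc‖ ^ 4 ≤ lyapunov s xf xa xc :=
  (le_add_of_nonneg_of_le (by positivity) (le_add_of_nonneg_left (by positivity))).trans
    (sum_norm_pow_le_lyapunov s xf xa xc)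

end Lyapunov

/-- The data of one coarse timestep of length `2 * s ^ 2`: the fine, antithetic and coarse values at
its start and the two Brownian increments. -/
structure StepConfig (d m : ℕ) (S : ℝ) where
  s : ℝ
  s_pos : 0 < s
  s_le : s ≤ S
  xf : Fin d → ℝ
  xa : Fin d → ℝ
  xc : Fin d → ℝ
  w₁ : Fin m → ℝ
  w₂ : Fin m → ℝ

namespace StepConfig

variable {d m : ℕ} {S : ℝ}

/-- Exchange the fine and antithetic paths and the order of the two increments. -/
def swap (p : StepConfig d m S) : StepConfig d m S :=
  { p with xf := p.xa, xa := p.xf, w₁ := p.w₂, w₂ := p.w₁ }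

/-- The Lyapunov function at the start of the step. -/
def value (p : StepConfig d m S) : ℝ := lyapunov p.s p.xf p.xa p.xc

/-- The size of the normalised increments, bounded below by `1`. -/
noncomputable def noiseSize (p : StepConfig d m S) : ℝ := 1 + (‖p.w₁‖ + ‖p.w₂‖) / p.s

theorem value_swap (p : StepConfig d m S) : p.swap.value = p.value := lyapunov_swap ..

theorem noiseSize_swap (p : StepConfig d m S) : p.swap.noiseSize = p.noiseSize := by
  simp only [noiseSize, swap, add_comm]

theorem value_nonneg (p : StepConfig d m S) : 0 ≤ p.value :=
  (pow_nonneg p.s_pos.le 4).trans (pow_four_le_lyapunov ..)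

theorem sqrt_sqrt_value_pow (p : StepConfig d m S) : √(√p.value) ^ 4 = p.value := by
  rw [show 4 = 2 * 2 from rfl, pow_mul, Real.sq_sqrt (Real.sqrt_nonneg _),
    Real.sq_sqrt p.value_nonneg]

theorem le_sqrt_sqrt_value {p : StepConfig d m S} {r : ℝ} (h : r ^ 4 ≤ p.value) :
    r ≤ √(√p.value) :=
  le_of_pow_le_pow_left₀ four_ne_zero (Real.sqrt_nonneg _) (h.trans_eq p.sqrt_sqrt_value_pow.symm)

/-- The gauge on steps whose error scale is the fourth root of the Lyapunov function. -/
noncomputable def gauge (d m : ℕ) (S : ℝ) : ErrorGauge (StepConfig d m S) where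
  s := s
  v p := √(√p.value)
  z := noiseSize
  bound := S
  s_pos := s_pos
  s_le_bound := s_le
  s_le_v _ := le_sqrt_sqrt_value (pow_four_le_lyapunov ..)
  one_le_z p := le_add_of_nonneg_right (by have := p.s_pos; positivity)

theorem isBigO_comp_swap {E : Type*} [NormedAddCommGroup E] {X : StepConfig d m S → E} {a : ℤ}
    {b : ℕ} (hX : (gauge d m S).IsBigO X a b) : (gauge d m S).IsBigO (fun p => X p.swap) a b :=
  hX.comp_of_scales_eq (fun _ => rfl) (fun p => congrArg (√√·) p.value_swap) noiseSize_swap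

theorem isBigO_of_norm_pow_four_le {E : Type*} [NormedAddCommGroup E] {X : StepConfig d m S → E}
    (h : ∀ p, ‖X p‖ ^ 4 ≤ p.value) : (gauge d m S).IsBigO X 0 1 :=
  ⟨0, .of_norm_le fun p => by simpa [gauge] using le_sqrt_sqrt_value (h p)⟩

theorem isBigO_fine_sub_coarse : (gauge d m S).IsBigO (fun p => p.xf - p.xc) 0 1 :=
  isBigO_of_norm_pow_four_le fun _ => norm_fine_sub_coarse_pow_le_lyapunov ..

theorem isBigO_antithetic_sub_coarse : (gauge d m S).IsBigO (fun p => p.xa - p.xc) 0 1 :=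
  isBigO_comp_swap isBigO_fine_sub_coarse

theorem isBigO_antithetic :
    (gauge d m S).IsBigO (fun p => p.xf + p.xa - (2 : ℝ) • p.xc) 0 2 :=
  ⟨0, .of_norm_le fun p => by
    have h : ‖p.xf + p.xa - (2 : ℝ) • p.xc‖ ≤ √p.value :=
      Real.le_sqrt_of_sq_le (norm_antithetic_sq_le_lyapunov ..)
    simpa [gauge] using h⟩

theorem isBigO_scaled_coarse : (gauge d m S).IsBigO (fun p => p.s • p.xc) 0 1 :=
  isBigO_of_norm_pow_four_le fun _ => norm_scaled_coarse_pow_le_lyapunov ..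

theorem isBigO_coarse : (gauge d m S).IsBigO (fun p => p.xc) (-1) 1 := by
  have hinv : (gauge d m S).IsBigO (fun p => p.s⁻¹) (-1) 0 :=
    ⟨0, by simpa [gauge] using isBigO_refl (fun p : StepConfig d m S => p.s⁻¹) ⊤⟩
  exact (hinv.smul isBigO_scaled_coarse).congr fun p => inv_smul_smul₀ p.s_pos.ne' _

theorem isBigO_fine : (gauge d m S).IsBigO (fun p => p.xf) (-1) 1 :=
  ((isBigO_fine_sub_coarse.weaken (-1) 1 (by norm_num) (by norm_num)).add isBigO_coarse).congr
    fun _ => sub_add_cancel _ _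

theorem isBigO_w₁ : (gauge d m S).IsBigO (fun p => p.w₁) 1 0 :=
  ⟨1, .of_norm_le fun p => by
    have hs := p.s_pos
    have h₂ := norm_nonneg p.w₂
    simp only [gauge, noiseSize, zpow_one, pow_zero, mul_one, pow_one, mul_add,
      mul_div_cancel₀ _ hs.ne']
    linarith⟩

theorem isBigO_w₂ : (gauge d m S).IsBigO (fun p => p.w₂) 1 0 := isBigO_comp_swap isBigO_w₁

end StepConfig

/-- The squared defect of a coarse value `c` from the mean of an antithetic pair `a`, `b`, together
with the fourth power of the spread of the pair. -/
noncomputable def antitheticGap {E : Type*} [NormedAddCommGroup E] [NormedSpace ℝ E] (a b c : E) :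
    ℝ :=
  ‖a + b - (2 : ℝ) • c‖ ^ 2 + ‖a - b‖ ^ 4

namespace StepConfig

open ErrorGauge

variable {d m : ℕ} {S : ℝ} (f : (Fin d → ℝ) → Fin d → ℝ) (g : (Fin d → ℝ) → Fin d → Fin m → ℝ)
  {Cf Cg : ℝ}

/-- The fine path in the middle of the step; at `p.swap` it is the antithetic path. -/
noncomputable def fineMid (p : StepConfig d m S) : Fin d → ℝ := milsteinStep f g (p.s ^ 2) p.xf p.w₁

/-- The fine path at the end of the step; at `p.swap` it is the antithetic path. -/
noncomputable def fineEnd (p : StepConfig d m S) : Fin d → ℝ :=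
  milsteinStep f g (p.s ^ 2) (p.fineMid f g) p.w₂

/-- The coarse path at the end of the step. -/
noncomputable def coarseEnd (p : StepConfig d m S) : Fin d → ℝ :=
  milsteinStep f g (2 * p.s ^ 2) p.xc (p.w₁ + p.w₂)

/-- The Lyapunov function at the end of the step. -/
noncomputable def nextValue (p : StepConfig d m S) : ℝ :=
  lyapunov p.s (p.fineEnd f g) (p.swap.fineEnd f g) (p.coarseEnd f g)

/-- The antithetic gap in the middle of the step, where the interpolated coarse path is the mean of
its two end values. -/
noncomputable def midGap (p : StepConfig d m S) : ℝ :=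
  antitheticGap (p.fineMid f g) (p.swap.fineMid f g) ((2⁻¹ : ℝ) • (p.xc + p.coarseEnd f g))

/-- The mean-zero part of the two fine steps. -/
noncomputable def fineNoise (p : StepConfig d m S) : Fin d → ℝ :=
  _root_.fineNoise f g (p.s ^ 2) p.xf p.w₁ p.w₂

/-- The mean-zero part of the coarse step. -/
noncomputable def coarseNoise (p : StepConfig d m S) : Fin d → ℝ :=
  milsteinNoise g (2 * p.s ^ 2) p.xc (p.w₁ + p.w₂)

/-- The derivative of the Lyapunov function in the fine path. -/
def fineSlope (p : StepConfig d m S) : Fin d → ℝ :=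
  2 * (p.xf + p.xa - (2 : ℝ) • p.xc) + 4 * (p.xf - p.xc) ^ 3

/-- The derivative of the Lyapunov function in the coarse path. -/
def coarseSlope (p : StepConfig d m S) : Fin d → ℝ :=
  (4 * p.s) • (p.s • p.xc) ^ 3 - p.fineSlope - p.swap.fineSlope

/-- The first-order effect of the noise on the Lyapunov function. -/
noncomputable def noiseEffect (p : StepConfig d m S) : ℝ :=
  p.fineSlope ⬝ᵥ p.fineNoise f g + p.swap.fineSlope ⬝ᵥ p.swap.fineNoise f g
    + p.coarseSlope ⬝ᵥ p.coarseNoise g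

variable {f g}

theorem coarseEnd_swap (p : StepConfig d m S) : p.swap.coarseEnd f g = p.coarseEnd f g := by
  simp only [coarseEnd, swap, add_comm]

theorem coarseNoise_swap (p : StepConfig d m S) : p.swap.coarseNoise g = p.coarseNoise g := by
  simp only [coarseNoise, swap, add_comm]

theorem fineEnd_eq (hg : Differentiable ℝ g) (p : StepConfig d m S) :
    p.fineEnd f g = p.xf + _root_.fineDrift f g (p.s ^ 2) p.xf p.w₁ + p.fineNoise f g :=
  milsteinStep_milsteinStep hg ..

variable (hf : BoundedC2 f Cf) (hg : BoundedC2 g Cg)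
include hf hg

theorem isBigO_fineEnd_sub_coarseEnd_pow :
    (gauge d m S).IsBigO (fun p => (p.fineEnd f g - p.coarseEnd f g) ^ 4 - (p.xf - p.xc) ^ 4
      - 4 * (p.xf - p.xc) ^ 3 * (p.fineNoise f g - p.coarseNoise g)) 2 4 :=
  (IsBigO.pow_four_expansion isBigO_fine_sub_coarse
    (isBigO_fineDrift_sub hf hg isBigO_fine isBigO_fine_sub_coarse isBigO_w₁)
    (isBigO_fineNoise_sub hf hg isBigO_fine isBigO_coarse isBigO_fine_sub_coarse isBigO_w₁
      isBigO_w₂)).congr fun p => by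
    rw [p.fineEnd_eq hg.differentiable, coarseEnd, milsteinStep_eq hg.differentiable]
    simp only [gauge, fineNoise, coarseNoise]
    ring

theorem isBigO_antitheticEnd_sub_coarseEnd_pow :
    (gauge d m S).IsBigO (fun p => (p.swap.fineEnd f g - p.coarseEnd f g) ^ 4 - (p.xa - p.xc) ^ 4
      - 4 * (p.xa - p.xc) ^ 3 * (p.swap.fineNoise f g - p.coarseNoise g)) 2 4 :=
  (isBigO_comp_swap (isBigO_fineEnd_sub_coarseEnd_pow hf hg)).congr fun p => by
    rw [coarseEnd_swap, coarseNoise_swap]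
    rfl

theorem isBigO_antitheticEnd_sq :
    (gauge d m S).IsBigO
      (fun p => (p.fineEnd f g + p.swap.fineEnd f g - (2 : ℝ) • p.coarseEnd f g) ^ 2
        - (p.xf + p.xa - (2 : ℝ) • p.xc) ^ 2 - 2 * (p.xf + p.xa - (2 : ℝ) • p.xc)
          * (p.fineNoise f g + p.swap.fineNoise f g - (2 : ℝ) • p.coarseNoise g)) 2 4 :=
  (IsBigO.sq_expansion isBigO_antithetic
    (isBigO_fineDrift_antithetic hf hg isBigO_fine (isBigO_comp_swap isBigO_fine)
      isBigO_fine_sub_coarse isBigO_antithetic_sub_coarse isBigO_antithetic isBigO_w₁ isBigO_w₂)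
    (isBigO_fineNoise_antithetic hf hg isBigO_fine (isBigO_comp_swap isBigO_fine) isBigO_coarse
      isBigO_fine_sub_coarse isBigO_antithetic_sub_coarse isBigO_antithetic isBigO_w₁
      isBigO_w₂)).congr fun p => by
    have hcoarse := milsteinStep_eq hg.differentiable f (2 * p.s ^ 2) p.xc (p.w₁ + p.w₂)
    rw [p.fineEnd_eq hg.differentiable, p.swap.fineEnd_eq hg.differentiable, coarseEnd, hcoarse]
    simp only [gauge, fineNoise, coarseNoise, swap, smul_add]
    ring

theorem isBigO_scaled_coarseEnd_pow :
    (gauge d m S).IsBigO (fun p => (p.s • p.coarseEnd f g) ^ 4 - (p.s • p.xc) ^ 4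
      - 4 * (p.s • p.xc) ^ 3 * (p.s • p.coarseNoise g)) 2 4 :=
  (IsBigO.pow_four_expansion isBigO_scaled_coarse
    (IsBigO.scale.smul (hf.isBigO_drift isBigO_coarse 2))
    (IsBigO.scale.smul
      (hg.isBigO_milsteinNoise isBigO_coarse (isBigO_w₁.add isBigO_w₂) 2))).congr fun p => by
    rw [coarseEnd, milsteinStep_eq hg.differentiable]
    simp only [gauge, coarseNoise, smul_add]

theorem isBigO_nextValue_sub :
    (gauge d m S).IsBigO (fun p => p.nextValue f g - p.value - p.noiseEffect f g) 2 4 := by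
  refine (IsBigO.sum Finset.univ fun i => ((((isBigO_antitheticEnd_sq hf hg).add
    (isBigO_fineEnd_sub_coarseEnd_pow hf hg)).add
    (isBigO_antitheticEnd_sub_coarseEnd_pow hf hg)).add
    (isBigO_scaled_coarseEnd_pow hf hg)).apply i).congr fun p => ?_
  simp only [nextValue, value, lyapunov, noiseEffect, dotProduct, add_sub_add_left_eq_sub,
    ← Finset.sum_sub_distrib, ← Finset.sum_add_distrib]
  refine Finset.sum_congr rfl fun i _ => ?_
  simp only [fineSlope, coarseSlope, swap, Pi.add_apply, Pi.sub_apply, Pi.mul_apply, Pi.pow_apply,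
    Pi.smul_apply, Pi.ofNat_apply, smul_eq_mul]
  ring

theorem isBigO_fineMid_sub_xf :
    (gauge d m S).IsBigO (fun p => p.fineMid f g - p.xf) 0 1 :=
  isBigO_milsteinStep_sub hf hg isBigO_fine isBigO_w₁

theorem isBigO_fineMid_sub_swap :
    (gauge d m S).IsBigO (fun p => p.fineMid f g - p.swap.fineMid f g) 0 1 := by
  have hmid := isBigO_fineMid_sub_xf (S := S) hf hg
  exact ((hmid.sub (isBigO_comp_swap hmid)).add
    (isBigO_fine_sub_coarse.sub isBigO_antithetic_sub_coarse)).congr fun p => by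
      simp only [swap]
      abel

theorem isBigO_fineMid_sub_euler :
    (gauge d m S).IsBigO (fun p => p.fineMid f g - p.xf - fun l => g p.xc l ⬝ᵥ p.w₁) 0 2 := by
  have heuler := isBigO_milsteinStep_sub_euler_one hf hg (isBigO_fine (S := S)) isBigO_w₁
  have hdiff := (hg.isBigO_sub (isBigO_fine_sub_coarse (S := S))).dotProduct_rows isBigO_w₁
  refine ((heuler.add hdiff).weaken 0 2 (by norm_num) (by norm_num)).congr fun p => ?_
  ext i
  simp only [fineMid, gauge, Pi.sub_apply, Pi.add_apply, sub_dotProduct]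
  ring

theorem isBigO_midGap : (gauge d m S).IsBigO (fun p => p.midGap f g) 0 4 := by
  have hmid := isBigO_fineMid_sub_euler (S := S) hf hg
  have hcoarse := (isBigO_milsteinStep_sub_euler hf hg (isBigO_coarse (S := S))
    (isBigO_w₁.add isBigO_w₂) 2).weaken 0 2 (by norm_num) (by norm_num)
  have hdefect : (gauge d m S).IsBigO (fun p => p.fineMid f g + p.swap.fineMid f g
      - (2 : ℝ) • (2⁻¹ : ℝ) • (p.xc + p.coarseEnd f g)) 0 2 :=
    (((hmid.add (isBigO_comp_swap hmid)).add isBigO_antithetic).sub hcoarse).congr fun p => by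
      ext i
      simp only [coarseEnd, swap, gauge, Pi.sub_apply, Pi.add_apply, Pi.smul_apply, smul_eq_mul,
        dotProduct_add]
      ring
  exact (hdefect.norm.pow 2).add ((isBigO_fineMid_sub_swap hf hg).norm.pow 4)

end StepConfig

section MeanZero

variable {α β E F : Type*} {mα : MeasurableSpace α} {mβ : MeasurableSpace β} {μ : Measure α}
  {ν : Measure β} [NormedAddCommGroup E] [NormedSpace ℝ E] [NormedAddCommGroup F] [NormedSpace ℝ F]

/-- `X` is integrable with vanishing mean. -/
def HasMeanZero (X : α → E) (μ : Measure α) : Prop :=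
  Integrable X μ ∧ ∫ a, X a ∂μ = 0

namespace HasMeanZero

theorem add {X Y : α → E} (hX : HasMeanZero X μ) (hY : HasMeanZero Y μ) :
    HasMeanZero (fun a => X a + Y a) μ :=
  ⟨hX.1.add hY.1, by rw [integral_add hX.1 hY.1, hX.2, hY.2, add_zero]⟩

theorem clm_apply [CompleteSpace E] [CompleteSpace F] {X : α → E} (hX : HasMeanZero X μ)
    (L : E →L[ℝ] F) : HasMeanZero (fun a => L (X a)) μ :=
  ⟨L.integrable_comp hX.1, by rw [L.integral_comp_comm hX.1, hX.2, map_zero]⟩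

theorem const_smul {X : α → E} (hX : HasMeanZero X μ) (c : ℝ) :
    HasMeanZero (fun a => c • X a) μ :=
  ⟨hX.1.smul c, by rw [integral_smul, hX.2, smul_zero]⟩

theorem comp {X : β → E} (hX : HasMeanZero X ν) {φ : α → β} (hφ : MeasurePreserving φ μ ν) :
    HasMeanZero (fun a => X (φ a)) μ :=
  ⟨hφ.integrable_comp_of_integrable hX.1, by
    rw [← integral_map hφ.aemeasurable (hφ.map_eq ▸ hX.1.aestronglyMeasurable), hφ.map_eq, hX.2]⟩

theorem sum {κ : Type*} (t : Finset κ) {X : κ → α → E} (hX : ∀ k, HasMeanZero (X k) μ) :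
    HasMeanZero (fun a => ∑ k ∈ t, X k a) μ :=
  ⟨integrable_finsetSum t fun k _ => (hX k).1, by
    rw [integral_finsetSum t fun k _ => (hX k).1, Finset.sum_eq_zero fun k _ => (hX k).2]⟩

theorem pi {κ : Type*} [Fintype κ] {X : α → κ → ℝ} (hX : ∀ k, HasMeanZero (fun a => X a k) μ) :
    HasMeanZero X μ :=
  ⟨.of_eval fun k => (hX k).1, funext fun k => by
    rw [eval_integral (fun k => (hX k).1), (hX k).2, Pi.zero_apply]⟩

theorem apply {κ : Type*} [Fintype κ] {X : α → κ → ℝ} (hX : HasMeanZero X μ) (k : κ) :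
    HasMeanZero (fun a => X a k) μ :=
  hX.clm_apply (ContinuousLinearMap.proj k)

theorem mul_prod [SFinite μ] [SFinite ν] {A : α → ℝ} {X : β → ℝ} (hX : HasMeanZero X ν)
    (hA : Integrable A μ) : HasMeanZero (fun p => A p.1 * X p.2) (μ.prod ν) :=
  ⟨hA.mul_prod hX.1, by rw [integral_prod_mul, hX.2, mul_zero]⟩

theorem dotProduct_rows_prod {n κ : Type*} [Fintype n] [Fintype κ] [SFinite μ] [SFinite ν]
    {A : α → n → κ → ℝ} {X : β → κ → ℝ} (hX : HasMeanZero X ν) (hA : Integrable A μ) :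
    HasMeanZero (fun p i => A p.1 i ⬝ᵥ X p.2) (μ.prod ν) :=
  .pi fun i => .sum _ fun k => (hX.apply k).mul_prod ((hA.eval i).eval k)

theorem dotProduct {κ : Type*} [Fintype κ] {X : α → κ → ℝ} (hX : HasMeanZero X μ) (c : κ → ℝ) :
    HasMeanZero (fun a => c ⬝ᵥ X a) μ :=
  .sum _ fun k => (hX.apply k).const_smul (c k)

theorem dotProduct_rows {n κ : Type*} [Fintype κ] [Fintype n] {X : α → κ → ℝ}
    (hX : HasMeanZero X μ) (A : n → κ → ℝ) : HasMeanZero (fun a i => A i ⬝ᵥ X a) μ :=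
  .pi fun i => hX.dotProduct (A i)

end HasMeanZero

end MeanZero

/-- The law of an `m`-dimensional Brownian increment over a time `s ^ 2`. -/
noncomputable def brownianIncrement (m : ℕ) (s : ℝ) : Measure (Fin m → ℝ) :=
  Measure.pi fun _ => gaussianReal 0 (s ^ 2).toNNReal

namespace brownianIncrement

variable {m : ℕ} {s : ℝ}

instance : IsProbabilityMeasure (brownianIncrement m s) :=
  inferInstanceAs (IsProbabilityMeasure (Measure.pi _))

theorem measurePreserving_apply (j : Fin m) :
    MeasurePreserving (fun w => w j) (brownianIncrement m s) (gaussianReal 0 (s ^ 2).toNNReal) :=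
  measurePreserving_eval _ j

theorem memLp_apply (j : Fin m) {p : ENNReal} (hp : p ≠ ⊤) :
    MemLp (fun w => w j) p (brownianIncrement m s) :=
  (memLp_id_gaussianReal' p hp).comp_measurePreserving (measurePreserving_apply j)

theorem hasMeanZero_apply (j : Fin m) : HasMeanZero (fun w => w j) (brownianIncrement m s) :=
  HasMeanZero.comp ⟨memLp_one_iff_integrable.1 (memLp_id_gaussianReal 1), integral_id_gaussianReal⟩
    (measurePreserving_apply j)

theorem integral_mul_self (j : Fin m) : ∫ w, w j * w j ∂brownianIncrement m s = s ^ 2 := by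
  have hj := measurePreserving_apply (s := s) j
  calc ∫ w, w j * w j ∂brownianIncrement m s
      = Var[fun w => w j; brownianIncrement m s] := by
        simp only [variance_of_integral_eq_zero hj.aemeasurable (hasMeanZero_apply j).2, pow_two]
    _ = Var[fun x => x; gaussianReal 0 (s ^ 2).toNNReal] := by
        exact hj.variance_fun_comp aemeasurable_id
    _ = s ^ 2 := by rw [variance_fun_id_gaussianReal, Real.coe_toNNReal _ (sq_nonneg s)]

theorem integral_mul_of_ne {j k : Fin m} (hjk : j ≠ k) :
    ∫ w, w j * w k ∂brownianIncrement m s = 0 := by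
  have hindep : IndepFun (fun w => w j) (fun w => w k) (brownianIncrement m s) :=
    (iIndepFun_pi (X := fun _ x => x) fun _ => aemeasurable_id).indepFun hjk
  rw [hindep.integral_fun_mul_eq_mul_integral (hasMeanZero_apply j).1.aestronglyMeasurable
    (hasMeanZero_apply k).1.aestronglyMeasurable, (hasMeanZero_apply j).2, zero_mul]

theorem hasMeanZero_quadraticIncrement :
    HasMeanZero (quadraticIncrement (s ^ 2)) (brownianIncrement m s) := by
  have hmul : ∀ j k : Fin m, Integrable (fun w => w j * w k) (brownianIncrement m s) := fun j k =>
    MemLp.integrable_mul (p := 2) (q := 2) (memLp_apply j ENNReal.ofNat_ne_top)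
      (memLp_apply k ENNReal.ofNat_ne_top)
  refine .pi fun jk => ⟨(hmul jk.1 jk.2).sub (integrable_const _), ?_⟩
  simp only [quadraticIncrement]
  rw [integral_sub (hmul jk.1 jk.2) (integrable_const _), integral_const, probReal_univ, one_smul,
    sub_eq_zero]
  split_ifs with hjk
  · rw [hjk, integral_mul_self]
  · exact integral_mul_of_ne hjk

theorem map_smul : (brownianIncrement m 1).map (s • ·) = brownianIncrement m s := by
  have hcoord : (gaussianReal 0 (1 ^ 2 : ℝ).toNNReal).map (s * ·)
      = gaussianReal 0 (s ^ 2).toNNReal := by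
    rw [gaussianReal_map_const_mul, mul_zero]
    congr 1
    ext
    simp [sq_nonneg]
  rw [brownianIncrement, brownianIncrement, ← hcoord]
  exact Measure.pi_map_pi fun _ => (measurable_const_mul s).aemeasurable

end brownianIncrement

/-- The law of the increments of an `m`-dimensional Brownian motion over two consecutive time
intervals of length `s ^ 2`. -/
noncomputable def incrementPair (m : ℕ) (s : ℝ) : Measure ((Fin m → ℝ) × (Fin m → ℝ)) :=
  (brownianIncrement m s).prod (brownianIncrement m s)

namespace incrementPair

variable {m : ℕ} {s : ℝ}

instance : IsProbabilityMeasure (incrementPair m s) :=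
  inferInstanceAs (IsProbabilityMeasure (Measure.prod _ _))

theorem measurePreserving_fst : MeasurePreserving Prod.fst (incrementPair m s)
    (brownianIncrement m s) := MeasureTheory.measurePreserving_fst

theorem measurePreserving_snd : MeasurePreserving Prod.snd (incrementPair m s)
    (brownianIncrement m s) := MeasureTheory.measurePreserving_snd

theorem measurePreserving_swap : MeasurePreserving Prod.swap (incrementPair m s)
    (incrementPair m s) := Measure.measurePreserving_swap

theorem measurePreserving_smul : MeasurePreserving (s • ·) (incrementPair m 1)
    (incrementPair m s) := by
  have hs : MeasurePreserving (s • ·) (brownianIncrement m 1) (brownianIncrement m s) :=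
    ⟨measurable_const_smul s, brownianIncrement.map_smul⟩
  exact hs.prod hs

theorem memLp_norm_add_norm {q : ENNReal} (hq : q ≠ ⊤) :
    MemLp (fun w => ‖w.1‖ + ‖w.2‖) q (incrementPair m s) := by
  have hnorm : MemLp (fun w : Fin m → ℝ => ‖w‖) q (brownianIncrement m s) :=
    (MemLp.of_eval fun j => brownianIncrement.memLp_apply j hq).norm
  exact (hnorm.comp_measurePreserving measurePreserving_fst).add
    (hnorm.comp_measurePreserving measurePreserving_snd)

end incrementPair

namespace StepConfig

variable {d m : ℕ} {S : ℝ}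

/-- The step from the same initial values with the increments `w`. -/
def withNoise (p : StepConfig d m S) (w : (Fin m → ℝ) × (Fin m → ℝ)) : StepConfig d m S :=
  { p with w₁ := w.1, w₂ := w.2 }

theorem integrable_noiseSize_pow (p : StepConfig d m S) (q : ℕ) :
    Integrable (fun w => (p.withNoise w).noiseSize ^ q) (incrementPair m p.s) := by
  have hmem : MemLp (fun w => 1 + (‖w.1‖ + ‖w.2‖) * p.s⁻¹) q (incrementPair m p.s) :=
    MemLp.add (f := fun _ => (1 : ℝ)) (memLp_const 1)
      ((incrementPair.memLp_norm_add_norm (ENNReal.natCast_ne_top q)).mul_const _)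
  refine hmem.integrable_norm_pow'.congr (.of_forall fun w => ?_)
  have hs := p.s_pos
  have hnonneg : 0 ≤ 1 + (‖w.1‖ + ‖w.2‖) * p.s⁻¹ := by positivity
  simp only [Real.norm_of_nonneg hnonneg, noiseSize, withNoise, div_eq_mul_inv]

theorem integral_noiseSize_pow (p : StepConfig d m S) (q : ℕ) :
    ∫ w, (p.withNoise w).noiseSize ^ q ∂incrementPair m p.s
      = ∫ w, (1 + (‖w.1‖ + ‖w.2‖)) ^ q ∂incrementPair m 1 := by
  have hs := p.s_pos
  have hscale := incrementPair.measurePreserving_smul (m := m) (s := p.s)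
  rw [← hscale.map_eq, integral_map hscale.aemeasurable
    (hscale.map_eq ▸ (p.integrable_noiseSize_pow q).aestronglyMeasurable)]
  simp only [noiseSize, withNoise, Prod.smul_fst, Prod.smul_snd, norm_smul,
    Real.norm_of_nonneg hs.le, ← mul_add, mul_div_cancel_left₀ _ hs.ne']

variable {E : Type*} [NormedAddCommGroup E] {X : StepConfig d m S → E} {a : ℤ} {b : ℕ}

theorem integrable_of_isBigO (hX : (gauge d m S).IsBigO X a b) (p : StepConfig d m S)
    (hmeas : AEStronglyMeasurable (fun w => X (p.withNoise w)) (incrementPair m p.s)) :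
    Integrable (fun w => X (p.withNoise w)) (incrementPair m p.s) := by
  obtain ⟨q, K, -, hK⟩ := hX.exists_norm_le
  exact (((p.integrable_noiseSize_pow q).const_mul (p.s ^ a * √(√p.value) ^ b)).const_mul K).mono'
    hmeas (.of_forall fun w => hK (p.withNoise w))

theorem exists_integral_norm_le_of_isBigO (hX : (gauge d m S).IsBigO X a b) :
    ∃ K, 0 ≤ K ∧ ∀ p : StepConfig d m S,
      ∫ w, ‖X (p.withNoise w)‖ ∂incrementPair m p.s ≤ K * (p.s ^ a * √(√p.value) ^ b) := by
  obtain ⟨q, K, hK₀, hK⟩ := hX.exists_norm_le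
  refine ⟨K * ∫ w, (1 + (‖w.1‖ + ‖w.2‖)) ^ q ∂incrementPair m 1, by positivity, fun p => ?_⟩
  calc ∫ w, ‖X (p.withNoise w)‖ ∂incrementPair m p.s
      ≤ ∫ w, K * (p.s ^ a * √(√p.value) ^ b * (p.withNoise w).noiseSize ^ q)
          ∂incrementPair m p.s :=
        integral_mono_of_nonneg (.of_forall fun _ => norm_nonneg _)
          (((p.integrable_noiseSize_pow q).const_mul _).const_mul K)
          (.of_forall fun w => hK (p.withNoise w))
    _ = _ := by
        rw [integral_const_mul, integral_const_mul, integral_noiseSize_pow]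
        ring

end StepConfig

section Continuity

variable {d m : ℕ} {f : (Fin d → ℝ) → Fin d → ℝ} {g : (Fin d → ℝ) → Fin d → Fin m → ℝ} {Cf Cg : ℝ}
  {α : Type*} [TopologicalSpace α] {x : α → Fin d → ℝ} {w : α → Fin m → ℝ}

theorem BoundedC2.continuous_milsteinTensor (hg : BoundedC2 g Cg) :
    Continuous (milsteinTensor g) := by
  have hcolumn : ∀ j, Continuous fun x l => g x l j := fun j =>
    continuous_pi fun l => (continuous_apply_apply l j).comp hg.continuous
  exact continuous_pi fun i => continuous_pi fun jk => continuous_const.mul <|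
    (continuous_apply_apply i jk.2).comp (hg.continuous_fderiv.clm_apply (hcolumn jk.1))

theorem BoundedC2.continuous_milsteinNoise (hg : BoundedC2 g Cg) (dt : ℝ) (hx : Continuous x)
    (hw : Continuous w) : Continuous fun a => milsteinNoise g dt (x a) (w a) := by
  have hquad : Continuous fun a => quadraticIncrement dt (w a) := by
    unfold quadraticIncrement
    fun_prop
  have hg' := hg.continuous.comp hx
  have htensor := hg.continuous_milsteinTensor.comp hx
  exact continuous_pi fun i => (((continuous_apply i).comp hg').dotProduct hw).add
    (((continuous_apply i).comp htensor).dotProduct hquad)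

theorem continuous_milsteinStep (hf : BoundedC2 f Cf) (hg : BoundedC2 g Cg) (dt : ℝ)
    (hx : Continuous x) (hw : Continuous w) :
    Continuous fun a => milsteinStep f g dt (x a) (w a) := by
  simp only [milsteinStep_eq hg.differentiable]
  exact (hx.add ((hf.continuous.comp hx).const_smul dt)).add (hg.continuous_milsteinNoise dt hx hw)

end Continuity

section NoiseMean

variable {d m : ℕ} {f : (Fin d → ℝ) → Fin d → ℝ} {g : (Fin d → ℝ) → Fin d → Fin m → ℝ}

theorem hasMeanZero_milsteinNoise (g : (Fin d → ℝ) → Fin d → Fin m → ℝ) (s : ℝ) (x : Fin d → ℝ) :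
    HasMeanZero (milsteinNoise g (s ^ 2) x) (brownianIncrement m s) :=
  (HasMeanZero.dotProduct_rows (.pi brownianIncrement.hasMeanZero_apply) (g x)).add
    (brownianIncrement.hasMeanZero_quadraticIncrement.dotProduct_rows (milsteinTensor g x))

theorem hasMeanZero_milsteinNoise_prod {α : Type*} [MeasurableSpace α] {μ : Measure α} [SFinite μ]
    {s : ℝ} {x : α → Fin d → ℝ} (hdiffusion : Integrable (fun a => g (x a)) μ)
    (htensor : Integrable (fun a => milsteinTensor g (x a)) μ) :
    HasMeanZero (fun p => milsteinNoise g (s ^ 2) (x p.1) p.2) (μ.prod (brownianIncrement m s)) :=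
  (HasMeanZero.dotProduct_rows_prod (.pi brownianIncrement.hasMeanZero_apply) hdiffusion).add
    (brownianIncrement.hasMeanZero_quadraticIncrement.dotProduct_rows_prod htensor)

theorem hasMeanZero_twoStepIncrement (m : ℕ) (s : ℝ) :
    HasMeanZero (fun w => twoStepIncrement (s ^ 2) w.1 w.2) (incrementPair m s) := by
  have hquad := brownianIncrement.hasMeanZero_quadraticIncrement (m := m) (s := s)
  have hcross : ∀ j k : Fin m, HasMeanZero (fun w => w.1 j * w.2 k) (incrementPair m s) :=
    fun j k => (brownianIncrement.hasMeanZero_apply k).mul_prod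
      (brownianIncrement.hasMeanZero_apply j).1
  exact ((hquad.comp incrementPair.measurePreserving_fst).add
    (hquad.comp incrementPair.measurePreserving_snd)).add
    (.pi fun jk => (hcross jk.1 jk.2).const_smul 2)

theorem hasMeanZero_coarseNoise (g : (Fin d → ℝ) → Fin d → Fin m → ℝ) (s : ℝ) (x : Fin d → ℝ) :
    HasMeanZero (fun w => milsteinNoise g (2 * s ^ 2) x (w.1 + w.2)) (incrementPair m s) := by
  have hincrement : HasMeanZero (fun w => w.1 + w.2) (incrementPair m s) :=
    (HasMeanZero.comp (.pi brownianIncrement.hasMeanZero_apply)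
      incrementPair.measurePreserving_fst).add
      (.comp (.pi brownianIncrement.hasMeanZero_apply) incrementPair.measurePreserving_snd)
  have hquad : HasMeanZero (fun w => quadraticIncrement (2 * s ^ 2) (w.1 + w.2))
      (incrementPair m s) := by
    have htwo := hasMeanZero_twoStepIncrement m s
    simpa only [Prod.fst_swap, Prod.snd_swap, twoStepIncrement_add_swap, smul_smul,
      inv_mul_cancel₀ (two_ne_zero' ℝ), one_smul] using
      (htwo.add (htwo.comp incrementPair.measurePreserving_swap)).const_smul 2⁻¹
  exact (hincrement.dotProduct_rows (g x)).add (hquad.dotProduct_rows (milsteinTensor g x))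

end NoiseMean

namespace StepConfig

open ErrorGauge

variable {d m : ℕ} {S : ℝ} {f : (Fin d → ℝ) → Fin d → ℝ} {g : (Fin d → ℝ) → Fin d → Fin m → ℝ}
  {Cf Cg : ℝ} (hf : BoundedC2 f Cf) (hg : BoundedC2 g Cg) (p : StepConfig d m S)
include hf hg

theorem integrable_comp_fineMid {E : Type*} [NormedAddCommGroup E] {φ : (Fin d → ℝ) → E}
    (hφ : Continuous φ)
    (hbound : (gauge d m S).IsBigO (fun p => φ (p.fineMid f g)) (-1) 1) :
    Integrable (fun w => φ (milsteinStep f g (p.s ^ 2) p.xf w)) (brownianIncrement m p.s) := by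
  have hcont := hφ.comp (continuous_milsteinStep hf hg (p.s ^ 2) (continuous_const (y := p.xf))
    continuous_id)
  refine (incrementPair.measurePreserving_fst.integrable_comp hcont.aestronglyMeasurable).1 ?_
  exact p.integrable_of_isBigO hbound (hcont.comp continuous_fst).aestronglyMeasurable

theorem hasMeanZero_fineNoise :
    HasMeanZero (fun w => (p.withNoise w).fineNoise f g) (incrementPair m p.s) := by
  have hmid := isBigO_milsteinStep hf hg (isBigO_fine (S := S)) isBigO_w₁
  have hsecond := hasMeanZero_milsteinNoise_prod (s := p.s)
    (p.integrable_comp_fineMid hf hg hg.continuous (hg.isBigO_comp hmid))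
    (p.integrable_comp_fineMid hf hg hg.continuous_milsteinTensor (hg.isBigO_milsteinTensor hmid))
  have hdrift : HasMeanZero (fun w => fderiv ℝ f p.xf fun l => g p.xf l ⬝ᵥ w)
      (brownianIncrement m p.s) :=
    (HasMeanZero.dotProduct_rows (.pi brownianIncrement.hasMeanZero_apply) (g p.xf)).clm_apply _
  exact (((hasMeanZero_milsteinNoise g p.s p.xf).comp incrementPair.measurePreserving_fst).add
    hsecond).add ((hdrift.comp incrementPair.measurePreserving_fst).const_smul (p.s ^ 2))

theorem hasMeanZero_noiseEffect :
    HasMeanZero (fun w => (p.withNoise w).noiseEffect f g) (incrementPair m p.s) :=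
  (((p.hasMeanZero_fineNoise hf hg).dotProduct p.fineSlope).add
    (((p.swap.hasMeanZero_fineNoise hf hg).comp
      incrementPair.measurePreserving_swap).dotProduct p.swap.fineSlope)).add
    ((hasMeanZero_coarseNoise g p.s p.xc).dotProduct p.coarseSlope)

end StepConfig

section Recursion

variable {Ω α β : Type*} {mΩ : MeasurableSpace Ω} {μ : Measure Ω} [MeasurableSpace α]
  [MeasurableSpace β]

theorem lintegral_prodMk_le_of_indepFun [IsFiniteMeasure μ] {X : Ω → α} {Y : Ω → β}
    (hX : Measurable X) (hY : Measurable Y) (hXY : IndepFun X Y μ) {F : α × β → ENNReal}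
    (hF : Measurable F) {G : α → ENNReal} (hFG : ∀ x, ∫⁻ y, F (x, y) ∂μ.map Y ≤ G x) :
    ∫⁻ ω, F (X ω, Y ω) ∂μ ≤ ∫⁻ ω, G (X ω) ∂μ :=
  calc ∫⁻ ω, F (X ω, Y ω) ∂μ
      = ∫⁻ z, F z ∂(μ.map X).prod (μ.map Y) := by
        rw [← (indepFun_iff_map_prod_eq_prod_map_map hX.aemeasurable hY.aemeasurable).1 hXY,
          lintegral_map hF (hX.prodMk hY)]
    _ = ∫⁻ x, ∫⁻ y, F (x, y) ∂μ.map Y ∂μ.map X := lintegral_prod _ hF.aemeasurable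
    _ ≤ ∫⁻ x, G x ∂μ.map X := lintegral_mono hFG
    _ ≤ ∫⁻ ω, G (X ω) ∂μ := lintegral_map_le _ _

variable {N : ℕ} {X : ℕ → Ω → α} {ξ : Fin N → Ω → β} {step : α × β → α} {x₀ : α}
  (hstep : Measurable step) (hX₀ : ∀ ω, X 0 ω = x₀)
  (hX : ∀ (n : Fin N) ω, X (n + 1) ω = step (X n ω, ξ n ω))
include hstep hX₀ hX

theorem measurable_comap_of_recursion {n : ℕ} (hn : n ≤ N) :
    Measurable[⨆ k ∈ {k : Fin N | (k : ℕ) < n}, MeasurableSpace.comap (ξ k) inferInstance]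
      (X n) := by
  induction n with
  | zero => simp only [funext hX₀, measurable_const]
  | succ n ih =>
    let now : Fin N := ⟨n, hn⟩
    have hmono : (⨆ k ∈ {k : Fin N | (k : ℕ) < n}, MeasurableSpace.comap (ξ k) inferInstance)
        ≤ ⨆ k ∈ {k : Fin N | (k : ℕ) < n + 1}, MeasurableSpace.comap (ξ k) inferInstance :=
      biSup_mono fun k (hk : (k : ℕ) < n) => hk.trans n.lt_succ_self
    have hnoise : Measurable[⨆ k ∈ {k : Fin N | (k : ℕ) < n + 1},
        MeasurableSpace.comap (ξ k) inferInstance] (ξ now) :=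
      (comap_measurable (ξ now)).mono
        (le_biSup (fun k => MeasurableSpace.comap (ξ k) inferInstance)
          (show now ∈ {k : Fin N | (k : ℕ) < n + 1} from n.lt_succ_self)) le_rfl
    rw [funext (hX now)]
    exact hstep.comp (((ih (by lia)).mono hmono le_rfl).prodMk hnoise)

theorem measurable_of_recursion (hξ : ∀ n, Measurable (ξ n)) {n : ℕ} (hn : n ≤ N) :
    Measurable (X n) :=
  (measurable_comap_of_recursion hstep hX₀ hX hn).mono
    (iSup₂_le fun k _ => (hξ k).comap_le) le_rfl

theorem indepFun_of_recursion (hξ : ∀ n, Measurable (ξ n)) (hindep : iIndepFun ξ μ) (n : Fin N) :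
    IndepFun (X n) (ξ n) μ := by
  have hpast : Indep
      (⨆ k ∈ {k : Fin N | (k : ℕ) < n}, MeasurableSpace.comap (ξ k) inferInstance)
      (⨆ k ∈ ({n} : Set (Fin N)), MeasurableSpace.comap (ξ k) inferInstance) μ :=
    indep_iSup_of_disjoint (fun k => (hξ k).comap_le) hindep
      (Set.disjoint_singleton_right.2 fun h : (n : ℕ) < n => h.false)
  refine indep_of_indep_of_le_left (indep_of_indep_of_le_right hpast ?_)
    (measurable_comap_of_recursion hstep hX₀ hX n.is_lt.le).comap_le
  exact le_biSup (fun k => MeasurableSpace.comap (ξ k) inferInstance) (Set.mem_singleton n)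

variable [IsProbabilityMeasure μ] {ν : Measure β}

theorem lintegral_recursion_le (hξ : ∀ n, Measurable (ξ n)) (hlaw : ∀ n, μ.map (ξ n) = ν)
    (hindep : iIndepFun ξ μ) {F : α × β → ENNReal} (hF : Measurable F) {G : α → ENNReal}
    (hFG : ∀ x, ∫⁻ y, F (x, y) ∂ν ≤ G x) (n : Fin N) :
    ∫⁻ ω, F (X n ω, ξ n ω) ∂μ ≤ ∫⁻ ω, G (X n ω) ∂μ :=
  lintegral_prodMk_le_of_indepFun (measurable_of_recursion hstep hX₀ hX hξ n.is_lt.le) (hξ n)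
    (indepFun_of_recursion hstep hX₀ hX hξ hindep n) hF (by rwa [hlaw])

theorem lintegral_le_pow_mul_of_recursion (hξ : ∀ n, Measurable (ξ n))
    (hlaw : ∀ n, μ.map (ξ n) = ν) (hindep : iIndepFun ξ μ) {V : α → ENNReal} (hV : Measurable V)
    {c : ENNReal} (hc : c ≠ ⊤) (hdrift : ∀ x, ∫⁻ y, V (step (x, y)) ∂ν ≤ c * V x) {n : ℕ}
    (hn : n ≤ N) : ∫⁻ ω, V (X n ω) ∂μ ≤ c ^ n * V x₀ := by
  induction n with
  | zero => simp only [hX₀, lintegral_const, measure_univ, mul_one, pow_zero, one_mul, le_refl]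
  | succ n ih =>
    calc ∫⁻ ω, V (X (n + 1) ω) ∂μ
        = ∫⁻ ω, V (step (X n ω, ξ ⟨n, hn⟩ ω)) ∂μ := lintegral_congr fun ω => by
          rw [← hX ⟨n, hn⟩ ω]
      _ ≤ ∫⁻ ω, c * V (X n ω) ∂μ :=
          lintegral_recursion_le hstep hX₀ hX hξ hlaw hindep (hV.comp hstep) hdrift ⟨n, hn⟩
      _ = c * ∫⁻ ω, V (X n ω) ∂μ := lintegral_const_mul' c _ hc
      _ ≤ c * (c ^ n * V x₀) := by gcongr; exact ih (by lia)
      _ = c ^ (n + 1) * V x₀ := by rw [pow_succ', mul_assoc]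

end Recursion

section Increments

variable {Ω : Type*} [MeasurableSpace Ω] {μ : Measure Ω}

theorem iIndepFun_curry [IsProbabilityMeasure μ] {ι κ E : Type*} [MeasurableSpace E]
    {X : ι → κ → Ω → E} (hX : ∀ i j, Measurable (X i j))
    (hindep : iIndepFun (fun q : ι × κ => X q.1 q.2) μ) :
    iIndepFun (fun i ω j => X i j ω) μ := by
  have hrow : ∀ i, μ.map (fun ω j => X i j ω) = Measure.infinitePi fun j => μ.map (X i j) :=
    fun i => (hindep.precomp (Prod.mk_right_injective i)).map_fun_eq_infinitePi_map (hX i)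
  have hjoint : μ.map (fun ω (q : ι × κ) => X q.1 q.2 ω)
      = Measure.infinitePi fun q : ι × κ => μ.map (X q.1 q.2) :=
    hindep.map_fun_eq_infinitePi_map fun q => hX q.1 q.2
  have hcurry : (fun ω i j => X i j ω)
      = MeasurableEquiv.curry ι κ E ∘ fun ω (q : ι × κ) => X q.1 q.2 ω := rfl
  have : ∀ i j, IsProbabilityMeasure (μ.map (X i j)) := fun i j =>
    Measure.isProbabilityMeasure_map (hX i j).aemeasurable
  rw [iIndepFun_iff_map_fun_eq_infinitePi_map (fun i => measurable_pi_lambda _ (hX i)), hcurry,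
    ← Measure.map_map (MeasurableEquiv.measurable _)
      (measurable_pi_lambda _ fun q : ι × κ => hX q.1 q.2),
    hjoint, Measure.infinitePi_map_curry fun i j => μ.map (X i j)]
  simp only [hrow]

variable {N m : ℕ} {W : Fin N → Bool → Ω → Fin m → ℝ} {s : ℝ}
  (hW : ∀ n b j, Measurable fun ω => W n b ω j)
  (hindep : iIndepFun (fun q : Fin N × Bool × Fin m => fun ω => W q.1 q.2.1 ω q.2.2) μ)
  [IsProbabilityMeasure μ]
include hW hindep

theorem iIndepFun_incrementPair : iIndepFun (fun n ω => (W n false ω, W n true ω)) μ :=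
  (iIndepFun_curry (X := fun n (q : Bool × Fin m) ω => W n q.1 ω q.2) (fun n q => hW n q.1 q.2)
    hindep).comp (fun _ z => (fun j => z (false, j), fun j => z (true, j))) fun _ => by fun_prop

theorem map_incrementPair
    (hlaw : ∀ n b j, μ.map (fun ω => W n b ω j) = gaussianReal 0 (s ^ 2).toNNReal) (n : Fin N) :
    μ.map (fun ω => (W n false ω, W n true ω)) = incrementPair m s := by
  have hincrement : ∀ b, μ.map (W n b) = brownianIncrement m s := fun b => by
    have hcoord : iIndepFun (fun j ω => W n b ω j) μ :=
      hindep.precomp (g := fun j => (n, b, j)) fun _ _ h => congrArg (·.2.2) h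
    rw [brownianIncrement, ← funext (hlaw n b)]
    exact hcoord.map_fun_eq_pi_map fun j => (hW n b j).aemeasurable
  have hblocks : iIndepFun (fun b => W n b) μ :=
    iIndepFun_curry (X := fun b j ω => W n b ω j) (hW n)
      (hindep.precomp (g := Prod.mk n) (Prod.mk_right_injective n))
  have hmeas : ∀ b, AEMeasurable (W n b) μ := fun b =>
    (measurable_pi_lambda _ (hW n b)).aemeasurable
  rw [(indepFun_iff_map_prod_eq_prod_map_map (hmeas false) (hmeas true)).1
    (hblocks.indepFun Bool.false_ne_true), hincrement, hincrement, incrementPair]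

end Increments

/-- The values of the fine, antithetic and coarse paths at a time of the coarse grid. -/
abbrev CoupledState (d : ℕ) : Type := (Fin d → ℝ) × (Fin d → ℝ) × (Fin d → ℝ)

theorem continuous_lyapunov {d : ℕ} (s : ℝ) :
    Continuous fun x : CoupledState d => lyapunov s x.1 x.2.1 x.2.2 := by
  unfold lyapunov
  fun_prop

namespace StepConfig

variable {d m : ℕ} {S s : ℝ} {f : (Fin d → ℝ) → Fin d → ℝ} {g : (Fin d → ℝ) → Fin d → Fin m → ℝ}
  {Cf Cg : ℝ}

/-- The timestep from a state and a pair of increments. -/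
def ofState (hs : 0 < s) (hsS : s ≤ S) (q : CoupledState d × (Fin m → ℝ) × (Fin m → ℝ)) :
    StepConfig d m S where
  s := s
  s_pos := hs
  s_le := hsS
  xf := q.1.1
  xa := q.1.2.1
  xc := q.1.2.2
  w₁ := q.2.1
  w₂ := q.2.2

/-- The state at the end of the step. -/
noncomputable def nextState (f : (Fin d → ℝ) → Fin d → ℝ) (g : (Fin d → ℝ) → Fin d → Fin m → ℝ)
    (p : StepConfig d m S) : CoupledState d :=
  (p.fineEnd f g, p.swap.fineEnd f g, p.coarseEnd f g)

section Continuity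

variable {E : Type*} [TopologicalSpace E] {X : StepConfig d m S → E} {hs : 0 < s} {hsS : s ≤ S}

theorem continuous_comp_swap (hX : Continuous fun q => X (ofState hs hsS q)) :
    Continuous fun q => X (ofState hs hsS q).swap :=
  hX.comp (f := fun q : CoupledState d × _ × _ => ((q.1.2.1, q.1.1, q.1.2.2), (q.2.2, q.2.1)))
    (by fun_prop)

theorem continuous_comp_withNoise {p : StepConfig d m S}
    (hX : Continuous fun q => X (ofState p.s_pos p.s_le q)) :
    Continuous fun w => X (p.withNoise w) :=
  hX.comp (f := fun w => ((p.xf, p.xa, p.xc), w)) (by fun_prop)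

variable (hf : BoundedC2 f Cf) (hg : BoundedC2 g Cg)
include hf hg

theorem continuous_fineMid : Continuous fun q => (ofState hs hsS q).fineMid f g :=
  continuous_milsteinStep hf hg (s ^ 2) continuous_fst.fst continuous_snd.fst

theorem continuous_coarseEnd : Continuous fun q => (ofState hs hsS q).coarseEnd f g :=
  continuous_milsteinStep hf hg (2 * s ^ 2) continuous_fst.snd.snd
    (continuous_snd.fst.add continuous_snd.snd)

theorem continuous_nextState : Continuous fun q => (ofState hs hsS q).nextState f g := by
  have hend : Continuous fun q => (ofState hs hsS q).fineEnd f g :=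
    continuous_milsteinStep hf hg (s ^ 2) (continuous_fineMid hf hg) continuous_snd.snd
  exact hend.prodMk ((continuous_comp_swap hend).prodMk (continuous_coarseEnd hf hg))

theorem continuous_nextValue : Continuous fun q => (ofState hs hsS q).nextValue f g :=
  (continuous_lyapunov s).comp (f := fun q => (ofState hs hsS q).nextState f g)
    (continuous_nextState hf hg)

theorem continuous_midGap : Continuous fun q => (ofState hs hsS q).midGap f g := by
  have hmid : Continuous fun q => (ofState hs hsS q).fineMid f g := continuous_fineMid hf hg
  have hswap := continuous_comp_swap hmid
  have hcoarse : Continuous fun q => (2⁻¹ : ℝ) • (q.1.2.2 + (ofState hs hsS q).coarseEnd f g) :=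
    (continuous_fst.snd.snd.add (continuous_coarseEnd hf hg)).const_smul (2⁻¹ : ℝ)
  exact (((hmid.add hswap).sub (hcoarse.const_smul (2 : ℝ))).norm.pow 2).add
    ((hmid.sub hswap).norm.pow 4)

end Continuity

variable (hf : BoundedC2 f Cf) (hg : BoundedC2 g Cg)
include hf hg

theorem exists_lintegral_nextValue_le : ∃ K, 0 ≤ K ∧ ∀ p : StepConfig d m S,
    ∫⁻ w, ENNReal.ofReal ((p.withNoise w).nextValue f g) ∂incrementPair m p.s
      ≤ ENNReal.ofReal ((1 + K * p.s ^ 2) * p.value) := by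
  obtain ⟨K, hK, hremainder⟩ := exists_integral_norm_le_of_isBigO (isBigO_nextValue_sub hf hg)
  refine ⟨K, hK, fun p => ?_⟩
  obtain ⟨hint, hmean⟩ := p.hasMeanZero_noiseEffect hf hg
  have hvalue := integrable_const (μ := incrementPair m p.s) p.value
  have hrem : Integrable (fun w => (p.withNoise w).nextValue f g - p.value
      - (p.withNoise w).noiseEffect f g) (incrementPair m p.s) :=
    p.integrable_of_isBigO (isBigO_nextValue_sub hf hg)
      (((continuous_comp_withNoise (continuous_nextValue hf hg)).aestronglyMeasurable.sub
        hvalue.aestronglyMeasurable).sub hint.aestronglyMeasurable)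
  have hsplit : (fun w => (p.withNoise w).nextValue f g)
      = (fun _ => p.value) + (fun w => (p.withNoise w).noiseEffect f g)
        + fun w => (p.withNoise w).nextValue f g - p.value - (p.withNoise w).noiseEffect f g := by
    ext w
    simp only [Pi.add_apply]
    ring
  have hnext : Integrable (fun w => (p.withNoise w).nextValue f g) (incrementPair m p.s) :=
    hsplit ▸ (hvalue.add hint).add hrem
  rw [← ofReal_integral_eq_lintegral_ofReal hnext
    (.of_forall fun w => (pow_four_le_lyapunov ..).trans' (by positivity))]
  refine ENNReal.ofReal_le_ofReal ?_
  calc ∫ w, (p.withNoise w).nextValue f g ∂incrementPair m p.s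
      = p.value + ∫ w, ((p.withNoise w).nextValue f g - p.value
          - (p.withNoise w).noiseEffect f g) ∂incrementPair m p.s := by
        rw [hsplit, integral_add' (hvalue.add hint) hrem, integral_add' hvalue hint, hmean]
        simp only [integral_const, probReal_univ, one_smul, add_zero]
    _ ≤ p.value + K * (p.s ^ (2 : ℤ) * √(√p.value) ^ 4) := by
        gcongr
        exact (Real.le_norm_self _).trans ((norm_integral_le_integral_norm _).trans (hremainder p))
    _ = (1 + K * p.s ^ 2) * p.value := by
        rw [sqrt_sqrt_value_pow, zpow_ofNat]
        ring

theorem exists_lintegral_midGap_le : ∃ K, 0 ≤ K ∧ ∀ p : StepConfig d m S,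
    ∫⁻ w, ENNReal.ofReal ((p.withNoise w).midGap f g) ∂incrementPair m p.s
      ≤ ENNReal.ofReal (K * p.value) := by
  obtain ⟨K, hK, hbound⟩ := exists_integral_norm_le_of_isBigO (isBigO_midGap hf hg)
  refine ⟨K, hK, fun p => ?_⟩
  have hnonneg : ∀ w, 0 ≤ (p.withNoise w).midGap f g := fun w => by
    unfold midGap antitheticGap
    positivity
  rw [← ofReal_integral_eq_lintegral_ofReal (p.integrable_of_isBigO (isBigO_midGap hf hg)
    (continuous_comp_withNoise (continuous_midGap hf hg)).aestronglyMeasurable)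
    (.of_forall hnonneg)]
  refine ENNReal.ofReal_le_ofReal ?_
  simpa only [Real.norm_of_nonneg (hnonneg _), zpow_zero, one_mul, sqrt_sqrt_value_pow]
    using hbound p

end StepConfig

section GridAverage

/-- The time average of the piecewise linear interpolation of a path on a grid of `2 * N`
intervals, grouped into the `N` coarse timesteps. -/
noncomputable def gridAverage {E : Type*} [AddCommGroup E] [Module ℝ E] (N : ℕ) (X : ℕ → E) : E :=
  (N : ℝ)⁻¹ • ∑ n ∈ Finset.range N,
    (4⁻¹ : ℝ) • (X (2 * n) + (2 : ℝ) • X (2 * n + 1) + X (2 * n + 2))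

/-- The piecewise linear interpolation of a path on the coarse grid, on the grid twice as fine. -/
noncomputable def midpointInterpolation {E : Type*} [AddCommGroup E] [Module ℝ E] (X : ℕ → E)
    (k : ℕ) : E :=
  (2⁻¹ : ℝ) • (X (k / 2) + X ((k + 1) / 2))

section Module

variable {E : Type*} [AddCommGroup E] [Module ℝ E] {N : ℕ}

theorem midpointInterpolation_even (X : ℕ → E) (n : ℕ) :
    midpointInterpolation X (2 * n) = X n := by
  rw [midpointInterpolation, show 2 * n / 2 = n by lia, show (2 * n + 1) / 2 = n by lia]
  module

theorem midpointInterpolation_odd (X : ℕ → E) (n : ℕ) :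
    midpointInterpolation X (2 * n + 1) = (2⁻¹ : ℝ) • (X n + X (n + 1)) := by
  rw [midpointInterpolation, show (2 * n + 1) / 2 = n by lia,
    show (2 * n + 1 + 1) / 2 = n + 1 by lia]

theorem gridAverage_midpointInterpolation (N : ℕ) (X : ℕ → E) :
    gridAverage N (midpointInterpolation X)
      = (N : ℝ)⁻¹ • ∑ n ∈ Finset.range N, (2⁻¹ : ℝ) • (X n + X (n + 1)) := by
  refine congrArg _ (Finset.sum_congr rfl fun n _ => ?_)
  rw [show 2 * n + 2 = 2 * (n + 1) by ring, midpointInterpolation_even, midpointInterpolation_even,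
    midpointInterpolation_odd]
  module

theorem gridAverage_le {Y : ℕ → ℝ} {B : ℝ} (hN : N ≠ 0) (hY : ∀ k ≤ 2 * N, Y k ≤ B) :
    gridAverage N Y ≤ B := by
  have hstep : ∀ n ∈ Finset.range N,
      (4⁻¹ : ℝ) • (Y (2 * n) + (2 : ℝ) • Y (2 * n + 1) + Y (2 * n + 2)) ≤ B := fun n hn => by
    have hn := Finset.mem_range.1 hn
    have hstart := hY (2 * n) (by lia)
    have hmid := hY (2 * n + 1) (by lia)
    have hend := hY (2 * n + 2) (by lia)
    simp only [smul_eq_mul]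
    linarith
  rw [gridAverage, smul_eq_mul, inv_mul_le_iff₀ (by positivity)]
  simpa using Finset.sum_le_card_nsmul _ _ _ hstep

theorem map_gridAverage_le_of_convexOn (hN : N ≠ 0) {φ : E → ℝ} (hφ : ConvexOn ℝ Set.univ φ)
    (X : ℕ → E) : φ (gridAverage N X) ≤ gridAverage N fun k => φ (X k) := by
  have hmidpoint : ∀ a b : E, φ ((2⁻¹ : ℝ) • a + (2⁻¹ : ℝ) • b) ≤ 2⁻¹ * φ a + 2⁻¹ * φ b :=
    fun a b => hφ.2 (Set.mem_univ a) (Set.mem_univ b) (by norm_num) (by norm_num) (by norm_num)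
  have hstep : ∀ a b c : E, φ ((4⁻¹ : ℝ) • (a + (2 : ℝ) • b + c))
      ≤ (4⁻¹ : ℝ) • (φ a + (2 : ℝ) • φ b + φ c) := fun a b c => by
    have hends := hmidpoint a c
    have hsplit := hmidpoint ((2⁻¹ : ℝ) • a + (2⁻¹ : ℝ) • c) b
    rw [show (2⁻¹ : ℝ) • ((2⁻¹ : ℝ) • a + (2⁻¹ : ℝ) • c) + (2⁻¹ : ℝ) • b
      = (4⁻¹ : ℝ) • (a + (2 : ℝ) • b + c) by module] at hsplit
    simp only [smul_eq_mul]
    linarith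
  calc φ (gridAverage N X)
      ≤ ∑ n ∈ Finset.range N, (N : ℝ)⁻¹
          • φ ((4⁻¹ : ℝ) • (X (2 * n) + (2 : ℝ) • X (2 * n + 1) + X (2 * n + 2))) := by
        rw [gridAverage, Finset.smul_sum]
        exact hφ.map_sum_le (fun _ _ => by positivity) (by simp [hN]) fun _ _ => Set.mem_univ _
    _ ≤ gridAverage N fun k => φ (X k) := by
        rw [gridAverage, Finset.smul_sum]
        exact Finset.sum_le_sum fun n _ => mul_le_mul_of_nonneg_left (hstep _ _ _) (by positivity)

end Module

variable {E : Type*} [NormedAddCommGroup E] [NormedSpace ℝ E]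

theorem integral_gridAverage {Ω : Type*} [MeasurableSpace Ω] {μ : Measure Ω} {N : ℕ}
    {Y : ℕ → Ω → E} (hY : ∀ k ≤ 2 * N, Integrable (Y k) μ) :
    Integrable (fun ω => gridAverage N fun k => Y k ω) μ ∧
      ∫ ω, gridAverage N (fun k => Y k ω) ∂μ = gridAverage N fun k => ∫ ω, Y k ω ∂μ := by
  have hstep : ∀ n ∈ Finset.range N,
      Integrable
        (fun ω => (4⁻¹ : ℝ) • (Y (2 * n) ω + (2 : ℝ) • Y (2 * n + 1) ω + Y (2 * n + 2) ω)) μ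
        ∧ ∫ ω, (4⁻¹ : ℝ) • (Y (2 * n) ω + (2 : ℝ) • Y (2 * n + 1) ω + Y (2 * n + 2) ω) ∂μ
          = (4⁻¹ : ℝ) • (∫ ω, Y (2 * n) ω ∂μ + (2 : ℝ) • ∫ ω, Y (2 * n + 1) ω ∂μ
            + ∫ ω, Y (2 * n + 2) ω ∂μ) := fun n hn => by
    have hn := Finset.mem_range.1 hn
    have hstart := hY (2 * n) (by lia)
    have hmid : Integrable (fun ω => (2 : ℝ) • Y (2 * n + 1) ω) μ :=
      (hY (2 * n + 1) (by lia)).smul (2 : ℝ)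
    have hend := hY (2 * n + 2) (by lia)
    have hsum : Integrable (fun ω => Y (2 * n) ω + (2 : ℝ) • Y (2 * n + 1) ω) μ := hstart.add hmid
    exact ⟨(hsum.add hend).smul (4⁻¹ : ℝ),
      by rw [integral_smul, integral_add hsum hend, integral_add hstart hmid, integral_smul]⟩
  refine ⟨(integrable_finsetSum _ fun n hn => (hstep n hn).1).smul (N : ℝ)⁻¹, ?_⟩
  simp only [gridAverage]
  rw [integral_smul, integral_finsetSum _ fun n hn => (hstep n hn).1,
    Finset.sum_congr rfl fun n hn => (hstep n hn).2]

theorem antitheticGap_nonneg (a b c : E) : 0 ≤ antitheticGap a b c := by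
  unfold antitheticGap
  positivity

theorem continuous_antitheticGap :
    Continuous fun x : E × E × E => antitheticGap x.1 x.2.1 x.2.2 := by
  unfold antitheticGap
  fun_prop

theorem convexOn_antitheticGap :
    ConvexOn ℝ Set.univ fun x : E × E × E => antitheticGap x.1 x.2.1 x.2.2 := by
  have hpow : ∀ k, ConvexOn ℝ Set.univ fun x : E => ‖x‖ ^ k := fun k =>
    convexOn_univ_norm.pow (fun _ _ => norm_nonneg _) k
  let fst := LinearMap.fst ℝ E (E × E)
  let snd := LinearMap.fst ℝ E E ∘ₗ LinearMap.snd ℝ E (E × E)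
  let thd := LinearMap.snd ℝ E E ∘ₗ LinearMap.snd ℝ E (E × E)
  exact ((hpow 2).comp_linearMap (fst + snd - (2 : ℝ) • thd)).add
    ((hpow 4).comp_linearMap (fst - snd))

theorem antitheticGap_gridAverage_le {N : ℕ} (hN : N ≠ 0) (a b c : ℕ → E) :
    antitheticGap (gridAverage N a) (gridAverage N b) (gridAverage N c)
      ≤ gridAverage N fun k => antitheticGap (a k) (b k) (c k) := by
  have hjensen := map_gridAverage_le_of_convexOn hN convexOn_antitheticGap
    fun k => (a k, b k, c k)
  simpa only [gridAverage, Prod.smul_fst, Prod.smul_snd, Prod.fst_sum, Prod.snd_sum, Prod.fst_add,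
    Prod.snd_add] using hjensen

theorem BoundedC2.sq_antithetic_le {P : E → ℝ} {C : ℝ} (hP : BoundedC2 P C) (a b c : E) :
    (1 / 2 * (P a + P b) - P c) ^ 2 ≤ C ^ 2 * antitheticGap a b c := by
  have h := hP.norm_antithetic_sub_le a b c
  rw [smul_eq_mul, Real.norm_eq_abs] at h
  calc (1 / 2 * (P a + P b) - P c) ^ 2 = (1 / 2) ^ 2 * |P a + P b - 2 * P c| ^ 2 := by
        rw [sq_abs]
        ring
    _ ≤ (1 / 2) ^ 2 * (C * (‖a + b - (2 : ℝ) • c‖ + ‖a - b‖ ^ 2)) ^ 2 := by gcongr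
    _ ≤ (1 / 2) ^ 2 * (C ^ 2 * (2 * (‖a + b - (2 : ℝ) • c‖ ^ 2 + (‖a - b‖ ^ 2) ^ 2))) := by
        rw [mul_pow]
        gcongr
        exact add_sq_le
    _ ≤ C ^ 2 * antitheticGap a b c := by
        have := mul_nonneg (sq_nonneg C) (antitheticGap_nonneg a b c)
        simp only [antitheticGap, ← pow_mul] at this ⊢
        linarith

theorem BoundedC2.integral_sq_gridAverage_le {Ω : Type*} [MeasurableSpace Ω] {μ : Measure Ω}
    {P : E → ℝ} {C B : ℝ} (hP : BoundedC2 P C) {N : ℕ} (hN : N ≠ 0) {a b c : ℕ → Ω → E}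
    (hgap : ∀ k ≤ 2 * N, Integrable (fun ω => antitheticGap (a k ω) (b k ω) (c k ω)) μ ∧
      ∫ ω, antitheticGap (a k ω) (b k ω) (c k ω) ∂μ ≤ B) :
    ∫ ω, (1 / 2 * (P (gridAverage N fun k => a k ω) + P (gridAverage N fun k => b k ω))
      - P (gridAverage N fun k => c k ω)) ^ 2 ∂μ ≤ C ^ 2 * B := by
  obtain ⟨hint, hintegral⟩ := integral_gridAverage fun k hk => (hgap k hk).1
  calc _ ≤ ∫ ω, C ^ 2 * gridAverage N (fun k => antitheticGap (a k ω) (b k ω) (c k ω)) ∂μ :=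
        integral_mono_of_nonneg (.of_forall fun _ => sq_nonneg _) (hint.const_mul _)
          (.of_forall fun ω => (hP.sq_antithetic_le _ _ _).trans
            (mul_le_mul_of_nonneg_left (antitheticGap_gridAverage_le hN _ _ _) (sq_nonneg C)))
    _ ≤ C ^ 2 * B := by
        rw [integral_const_mul, hintegral]
        gcongr
        exact gridAverage_le hN fun k hk => (hgap k hk).2

end GridAverage

theorem lyapunov_self {d : ℕ} (s : ℝ) (x : Fin d → ℝ) :
    lyapunov s x x x = (1 + ∑ i, x i ^ 4) * s ^ 4 := by
  simp only [lyapunov, sub_self, two_smul, ne_eq, OfNat.ofNat_ne_zero, not_false_eq_true, zero_pow,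
    zero_add, smul_pow, Pi.smul_apply, Pi.pow_apply, smul_eq_mul, ← Finset.mul_sum]
  ring

theorem antitheticGap_le_lyapunov {d : ℕ} (s : ℝ) (xf xa xc : Fin d → ℝ) :
    antitheticGap xf xa xc ≤ 17 * lyapunov s xf xa xc := by
  have hmean := norm_antithetic_sq_le_lyapunov s xf xa xc
  have hfine := norm_fine_sub_coarse_pow_le_lyapunov s xf xa xc
  have hanti := norm_antithetic_sub_coarse_pow_le_lyapunov s xf xa xc
  have hspread : ‖xf - xa‖ ^ 4 ≤ 2 ^ 3 * (‖xf - xc‖ ^ 4 + ‖xa - xc‖ ^ 4) :=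
    calc ‖xf - xa‖ ^ 4 ≤ (‖xf - xc‖ + ‖xa - xc‖) ^ 4 := by
          gcongr
          simpa only [norm_sub_rev xc xa] using norm_sub_le_norm_sub_add_norm_sub xf xc xa
      _ ≤ 2 ^ 3 * (‖xf - xc‖ ^ 4 + ‖xa - xc‖ ^ 4) :=
          add_pow_le (norm_nonneg _) (norm_nonneg _) 4
  rw [antitheticGap]
  linarith

theorem integrable_and_integral_le_of_lintegral_ofReal_le {Ω : Type*} [MeasurableSpace Ω]
    {μ : Measure Ω} {Y : Ω → ℝ} {B : ℝ} (hY : AEStronglyMeasurable Y μ) (hY₀ : 0 ≤ Y) (hB : 0 ≤ B)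
    (h : ∫⁻ ω, ENNReal.ofReal (Y ω) ∂μ ≤ ENNReal.ofReal B) :
    Integrable Y μ ∧ ∫ ω, Y ω ∂μ ≤ B :=
  ⟨(lintegral_ofReal_ne_top_iff_integrable hY (.of_forall hY₀)).1
    (h.trans_lt ENNReal.ofReal_lt_top).ne, by
    rw [integral_eq_lintegral_of_nonneg_ae (.of_forall hY₀) hY]
    exact ENNReal.toReal_le_of_le_ofReal hB h⟩

/-- The coarse path `Xc` and the pair of fine and antithetic paths `Xf`, `Xa`, indexed on the fine
grid, of the truncated Milstein scheme with fine timestep `s ^ 2`. They are driven by the Brownian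
increments `W n false` and `W n true` over the two halves of the `n`-th coarse timestep. -/
structure AntitheticMilstein {d m N : ℕ} {Ω : Type*} {mΩ : MeasurableSpace Ω}
    (f : (Fin d → ℝ) → Fin d → ℝ) (g : (Fin d → ℝ) → Fin d → Fin m → ℝ) (s : ℝ) (x₀ : Fin d → ℝ)
    (μ : Measure Ω) (W : Fin N → Bool → Ω → Fin m → ℝ) (Xf Xa Xc : ℕ → Ω → Fin d → ℝ) : Prop where
  measurable_increment : ∀ n b j, Measurable fun ω => W n b ω j
  map_increment : ∀ n b j, μ.map (fun ω => W n b ω j) = gaussianReal 0 (s ^ 2).toNNReal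
  iIndepFun_increment : iIndepFun (fun q : Fin N × Bool × Fin m => fun ω => W q.1 q.2.1 ω q.2.2) μ
  fine_zero : ∀ ω, Xf 0 ω = x₀
  antithetic_zero : ∀ ω, Xa 0 ω = x₀
  coarse_zero : ∀ ω, Xc 0 ω = x₀
  fine_mid : ∀ (n : Fin N) ω,
    Xf (2 * n + 1) ω = milsteinStep f g (s ^ 2) (Xf (2 * n) ω) (W n false ω)
  fine_end : ∀ (n : Fin N) ω,
    Xf (2 * n + 2) ω = milsteinStep f g (s ^ 2) (Xf (2 * n + 1) ω) (W n true ω)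
  antithetic_mid : ∀ (n : Fin N) ω,
    Xa (2 * n + 1) ω = milsteinStep f g (s ^ 2) (Xa (2 * n) ω) (W n true ω)
  antithetic_end : ∀ (n : Fin N) ω,
    Xa (2 * n + 2) ω = milsteinStep f g (s ^ 2) (Xa (2 * n + 1) ω) (W n false ω)
  coarse_succ : ∀ (n : Fin N) ω,
    Xc (n + 1) ω = milsteinStep f g (2 * s ^ 2) (Xc n ω) (W n false ω + W n true ω)

namespace AntitheticMilstein

variable {d m N : ℕ} {Ω : Type*} {mΩ : MeasurableSpace Ω} {f : (Fin d → ℝ) → Fin d → ℝ}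
  {g : (Fin d → ℝ) → Fin d → Fin m → ℝ} {Cf Cg s S : ℝ} {x₀ : Fin d → ℝ} {μ : Measure Ω}
  {W : Fin N → Bool → Ω → Fin m → ℝ} {Xf Xa Xc : ℕ → Ω → Fin d → ℝ}

/-- The values of the three paths at the start of the `n`-th coarse timestep. -/
def state (Xf Xa Xc : ℕ → Ω → Fin d → ℝ) (n : ℕ) (ω : Ω) : CoupledState d :=
  (Xf (2 * n) ω, Xa (2 * n) ω, Xc n ω)

/-- The two Brownian increments of the `n`-th coarse timestep. -/
def noise (W : Fin N → Bool → Ω → Fin m → ℝ) (n : Fin N) (ω : Ω) :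
    (Fin m → ℝ) × (Fin m → ℝ) :=
  (W n false ω, W n true ω)

variable (h : AntitheticMilstein f g s x₀ μ W Xf Xa Xc)
include h

theorem state_zero (ω : Ω) : state Xf Xa Xc 0 ω = (x₀, x₀, x₀) :=
  Prod.ext (h.fine_zero ω) (Prod.ext (h.antithetic_zero ω) (h.coarse_zero ω))

theorem measurable_noise (n : Fin N) : Measurable (noise W n) :=
  (measurable_pi_lambda _ (h.measurable_increment n false)).prodMk
    (measurable_pi_lambda _ (h.measurable_increment n true))

variable (hs : 0 < s) (hsS : s ≤ S)

theorem state_succ (n : Fin N) (ω : Ω) : state Xf Xa Xc (n + 1) ω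
    = (StepConfig.ofState hs hsS (state Xf Xa Xc n ω, noise W n ω)).nextState f g := by
  refine Prod.ext ?_ (Prod.ext ?_ (h.coarse_succ n ω))
  · exact (h.fine_end n ω).trans (congrArg (milsteinStep f g (s ^ 2) · _) (h.fine_mid n ω))
  · exact (h.antithetic_end n ω).trans
      (congrArg (milsteinStep f g (s ^ 2) · _) (h.antithetic_mid n ω))

theorem antitheticGap_odd (n : Fin N) (ω : Ω) :
    antitheticGap (Xf (2 * n + 1) ω) (Xa (2 * n + 1) ω)
        (midpointInterpolation (Xc · ω) (2 * n + 1))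
      = (StepConfig.ofState hs hsS (state Xf Xa Xc n ω, noise W n ω)).midGap f g := by
  rw [midpointInterpolation_odd, h.fine_mid, h.antithetic_mid, h.coarse_succ]
  rfl

variable (hf : BoundedC2 f Cf) (hg : BoundedC2 g Cg)
include hs hf hg

theorem measurable_state {n : ℕ} (hn : n ≤ N) : Measurable (state Xf Xa Xc n) :=
  measurable_of_recursion (StepConfig.continuous_nextState hf hg).measurable h.state_zero
    (h.state_succ hs le_rfl) h.measurable_noise hn

theorem measurable_antitheticGap {k : ℕ} (hk : k ≤ 2 * N) :
    Measurable fun ω =>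
      antitheticGap (Xf k ω) (Xa k ω) (midpointInterpolation (Xc · ω) k) := by
  obtain ⟨n, rfl | rfl⟩ := k.even_or_odd'
  · simp only [midpointInterpolation_even]
    exact continuous_antitheticGap.measurable.comp (h.measurable_state hs hf hg (by lia))
  · let now : Fin N := ⟨n, by lia⟩
    rw [funext (h.antitheticGap_odd hs le_rfl now)]
    exact (StepConfig.continuous_midGap hf hg).measurable.comp
      ((h.measurable_state hs hf hg now.is_lt.le).prodMk (h.measurable_noise now))

variable [IsProbabilityMeasure μ]
include hsS

theorem lintegral_lyapunov_le {K : ℝ} (hK : 0 ≤ K)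
    (hdrift : ∀ p : StepConfig d m S,
      ∫⁻ w, ENNReal.ofReal ((p.withNoise w).nextValue f g) ∂incrementPair m p.s
        ≤ ENNReal.ofReal ((1 + K * p.s ^ 2) * p.value)) {n : ℕ} (hn : n ≤ N) :
    ∫⁻ ω, ENNReal.ofReal (lyapunov s (Xf (2 * n) ω) (Xa (2 * n) ω) (Xc n ω)) ∂μ
      ≤ ENNReal.ofReal (Real.exp (K * (N * s ^ 2)) * lyapunov s x₀ x₀ x₀) := by
  have hrate : 0 ≤ 1 + K * s ^ 2 := by positivity
  have hgrowth : (1 + K * s ^ 2) ^ n ≤ Real.exp (K * (N * s ^ 2)) :=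
    calc (1 + K * s ^ 2) ^ n ≤ (1 + K * s ^ 2) ^ N :=
          pow_le_pow_right₀ (by nlinarith [sq_nonneg s]) hn
      _ ≤ Real.exp (K * s ^ 2) ^ N := by
          gcongr
          rw [add_comm]
          exact Real.add_one_le_exp _
      _ = Real.exp (K * (N * s ^ 2)) := by rw [← Real.exp_nat_mul]; ring_nf
  calc ∫⁻ ω, ENNReal.ofReal (lyapunov s (Xf (2 * n) ω) (Xa (2 * n) ω) (Xc n ω)) ∂μ
      ≤ ENNReal.ofReal (1 + K * s ^ 2) ^ n * ENNReal.ofReal (lyapunov s x₀ x₀ x₀) := by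
        refine lintegral_le_pow_mul_of_recursion (X := state Xf Xa Xc)
          (V := fun x => ENNReal.ofReal (lyapunov s x.1 x.2.1 x.2.2))
          (StepConfig.continuous_nextState hf hg).measurable h.state_zero (h.state_succ hs hsS)
          h.measurable_noise
          (map_incrementPair h.measurable_increment h.iIndepFun_increment h.map_increment)
          (iIndepFun_incrementPair h.measurable_increment h.iIndepFun_increment)
          (continuous_lyapunov s).measurable.ennreal_ofReal ENNReal.ofReal_ne_top (fun x => ?_) hn
        rw [← ENNReal.ofReal_mul hrate]
        exact hdrift (StepConfig.ofState hs hsS (x, 0))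
    _ ≤ ENNReal.ofReal (Real.exp (K * (N * s ^ 2)) * lyapunov s x₀ x₀ x₀) := by
        rw [← ENNReal.ofReal_pow hrate, ENNReal.ofReal_mul (Real.exp_nonneg _)]
        gcongr

theorem lintegral_antitheticGap_le {K B : ℝ} (hK : 0 ≤ K)
    (hmid : ∀ p : StepConfig d m S,
      ∫⁻ w, ENNReal.ofReal ((p.withNoise w).midGap f g) ∂incrementPair m p.s
        ≤ ENNReal.ofReal (K * p.value))
    (hB : ∀ n ≤ N, ∫⁻ ω, ENNReal.ofReal (lyapunov s (Xf (2 * n) ω) (Xa (2 * n) ω) (Xc n ω)) ∂μ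
      ≤ ENNReal.ofReal B) {k : ℕ} (hk : k ≤ 2 * N) :
    ∫⁻ ω, ENNReal.ofReal (antitheticGap (Xf k ω) (Xa k ω) (midpointInterpolation (Xc · ω) k)) ∂μ
      ≤ ENNReal.ofReal ((17 + K) * B) := by
  have hscale : ∀ c ≥ 0, c ≤ 17 + K → ∀ n ≤ N,
      ∫⁻ ω, ENNReal.ofReal (c * lyapunov s (Xf (2 * n) ω) (Xa (2 * n) ω) (Xc n ω)) ∂μ
        ≤ ENNReal.ofReal ((17 + K) * B) := fun c hc hcK n hn => by
    simp only [ENNReal.ofReal_mul hc, ENNReal.ofReal_mul (show 0 ≤ 17 + K by positivity)]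
    rw [lintegral_const_mul' _ _ ENNReal.ofReal_ne_top]
    gcongr
    exact hB n hn
  obtain ⟨n, rfl | rfl⟩ := k.even_or_odd'
  · refine (lintegral_mono fun ω => ENNReal.ofReal_le_ofReal ?_).trans
      (hscale 17 (by norm_num) (by linarith) n (by lia))
    rw [midpointInterpolation_even]
    exact antitheticGap_le_lyapunov s _ _ _
  · let now : Fin N := ⟨n, by lia⟩
    refine Eq.trans_le ?_ ((lintegral_recursion_le (X := state Xf Xa Xc)
      (F := fun q => ENNReal.ofReal ((StepConfig.ofState hs hsS q).midGap f g))
      (G := fun x => ENNReal.ofReal (K * lyapunov s x.1 x.2.1 x.2.2))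
      (StepConfig.continuous_nextState hf hg).measurable h.state_zero (h.state_succ hs hsS)
      h.measurable_noise
      (map_incrementPair h.measurable_increment h.iIndepFun_increment h.map_increment)
      (iIndepFun_incrementPair h.measurable_increment h.iIndepFun_increment)
      (StepConfig.continuous_midGap hf hg).measurable.ennreal_ofReal
      (fun x => hmid (StepConfig.ofState hs hsS (x, 0))) now).trans
      (hscale K hK (by linarith) n now.is_lt.le))
    exact lintegral_congr fun ω => congrArg _ (h.antitheticGap_odd hs hsS now ω)

end AntitheticMilstein

theorem exists_integral_antitheticGap_le {d m : ℕ} {f : (Fin d → ℝ) → Fin d → ℝ}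
    {g : (Fin d → ℝ) → Fin d → Fin m → ℝ} {Cf Cg : ℝ} (hf : BoundedC2 f Cf) (hg : BoundedC2 g Cg)
    (x₀ : Fin d → ℝ) (S : ℝ) :
    ∃ K, ∀ {N : ℕ} {Ω : Type*} {_ : MeasurableSpace Ω} {μ : Measure Ω} [IsProbabilityMeasure μ]
      {s : ℝ} {W : Fin N → Bool → Ω → Fin m → ℝ} {Xf Xa Xc : ℕ → Ω → Fin d → ℝ},
      0 < s → s ≤ S → N * s ^ 2 ≤ S ^ 2 → AntitheticMilstein f g s x₀ μ W Xf Xa Xc →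
      ∀ k ≤ 2 * N,
        Integrable (fun ω =>
          antitheticGap (Xf k ω) (Xa k ω) (midpointInterpolation (Xc · ω) k)) μ
        ∧ ∫ ω, antitheticGap (Xf k ω) (Xa k ω) (midpointInterpolation (Xc · ω) k) ∂μ
          ≤ K * s ^ 4 := by
  obtain ⟨K, hK, hdrift⟩ := StepConfig.exists_lintegral_nextValue_le (S := S) hf hg
  obtain ⟨L, hL, hmid⟩ := StepConfig.exists_lintegral_midGap_le (S := S) hf hg
  refine ⟨(17 + L) * (Real.exp (K * S ^ 2) * (1 + ∑ i, x₀ i ^ 4)),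
    fun {N _ _ μ _ s _ Xf Xa Xc} hs hsS hNs h k hk => ?_⟩
  refine integrable_and_integral_le_of_lintegral_ofReal_le
    (h.measurable_antitheticGap hs hf hg hk).aestronglyMeasurable
    (fun ω => antitheticGap_nonneg _ _ _) (by positivity) ?_
  have hgrid : ∀ n ≤ N,
      ∫⁻ ω, ENNReal.ofReal (lyapunov s (Xf (2 * n) ω) (Xa (2 * n) ω) (Xc n ω)) ∂μ
        ≤ ENNReal.ofReal (Real.exp (K * S ^ 2) * ((1 + ∑ i, x₀ i ^ 4) * s ^ 4)) := fun n hn => by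
    refine (h.lintegral_lyapunov_le hs hsS hf hg hK hdrift hn).trans ?_
    rw [lyapunov_self]
    gcongr
  rw [mul_assoc, mul_assoc (Real.exp _)]
  exact h.lintegral_antitheticGap_le hs hsS hf hg hL hmid hgrid hk

/-- in the antithetic Milstein setting, with the path averages
`Xc_ave = N⁻¹ ∑_{n<N} ½(Xc_n + Xc_{n+1})`,
`Xf_ave = N⁻¹ ∑_{n<N} ¼(Xf_n + 2 Xf_{n+½} + Xf_{n+1})` and
`Xa_ave = N⁻¹ ∑_{n<N} ¼(Xa_n + 2 Xa_{n+½} + Xa_{n+1})` (the fine path being indexed on the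
fine grid, so `Xf (2n)` is the value at coarse time `n Δt` and `Xf (2n+1)` at `(n+½) Δt`),
for any payoff `P : ℝ^d → ℝ` which is `C²` with uniformly bounded first and second
derivatives there is a constant `K`, independent of `N`, such that
`E[(½(P(Xf_ave) + P(Xa_ave)) − P(Xc_ave))²] ≤ K Δt²` for every `N ≥ 1`, `Δt = T/N`. -/
theorem antithetic_milstein_asian_variance
    {d m : ℕ} (hd : 0 < d) (hm : 0 < m) (T : ℝ) (hT : 0 < T)
    (f : (Fin d → ℝ) → Fin d → ℝ) (g : (Fin d → ℝ) → Fin d → Fin m → ℝ)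
    (hf : ContDiff ℝ 2 f) (hg : ContDiff ℝ 2 g) (Cfg : ℝ)
    (hf1 : ∀ x, ‖fderiv ℝ f x‖ ≤ Cfg) (hf2 : ∀ x, ‖iteratedFDeriv ℝ 2 f x‖ ≤ Cfg)
    (hg1 : ∀ x, ‖fderiv ℝ g x‖ ≤ Cfg) (hg2 : ∀ x, ‖iteratedFDeriv ℝ 2 g x‖ ≤ Cfg)
    (x₀ : Fin d → ℝ)
    (P : (Fin d → ℝ) → ℝ) (hP : ContDiff ℝ 2 P) (CP : ℝ)
    (hP1 : ∀ x, ‖fderiv ℝ P x‖ ≤ CP) (hP2 : ∀ x, ‖iteratedFDeriv ℝ 2 P x‖ ≤ CP) :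
    ∃ K : ℝ, ∀ N : ℕ, 1 ≤ N →
      ∀ (Ω : Type) (_ : MeasurableSpace Ω) (μ : Measure Ω), IsProbabilityMeasure μ →
      ∀ (W : Fin N → Bool → Ω → Fin m → ℝ) (Xf Xa Xc : ℕ → Ω → Fin d → ℝ),
        (∀ n b j, Measurable fun ω => W n b ω j) →
        (∀ n b j, μ.map (fun ω => W n b ω j) = gaussianReal 0 (Real.toNNReal (T / N / 2))) →
        iIndepFun (m := fun _ : Fin N × Bool × Fin m => inferInstance)
          (fun q : Fin N × Bool × Fin m => fun ω => W q.1 q.2.1 ω q.2.2) μ →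
        (∀ ω, Xf 0 ω = x₀) → (∀ ω, Xa 0 ω = x₀) → (∀ ω, Xc 0 ω = x₀) →
        (∀ (n : Fin N) ω, Xf (2 * (n : ℕ) + 1) ω
            = milsteinStep f g (T / N / 2) (Xf (2 * (n : ℕ)) ω) (W n false ω)) →
        (∀ (n : Fin N) ω, Xf (2 * (n : ℕ) + 2) ω
            = milsteinStep f g (T / N / 2) (Xf (2 * (n : ℕ) + 1) ω) (W n true ω)) →
        (∀ (n : Fin N) ω, Xa (2 * (n : ℕ) + 1) ω
            = milsteinStep f g (T / N / 2) (Xa (2 * (n : ℕ)) ω) (W n true ω)) →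
        (∀ (n : Fin N) ω, Xa (2 * (n : ℕ) + 2) ω
            = milsteinStep f g (T / N / 2) (Xa (2 * (n : ℕ) + 1) ω) (W n false ω)) →
        (∀ (n : Fin N) ω, Xc ((n : ℕ) + 1) ω
            = milsteinStep f g (T / N) (Xc (n : ℕ) ω) (W n false ω + W n true ω)) →
        (∫ ω, (1 / 2 * (P ((N : ℝ)⁻¹ • ∑ n ∈ Finset.range N,
                  (4⁻¹ : ℝ) • (Xf (2 * n) ω + (2 : ℝ) • Xf (2 * n + 1) ω + Xf (2 * n + 2) ω))
              + P ((N : ℝ)⁻¹ • ∑ n ∈ Finset.range N,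
                  (4⁻¹ : ℝ) • (Xa (2 * n) ω + (2 : ℝ) • Xa (2 * n + 1) ω + Xa (2 * n + 2) ω)))
            - P ((N : ℝ)⁻¹ • ∑ n ∈ Finset.range N,
                  (2⁻¹ : ℝ) • (Xc n ω + Xc (n + 1) ω))) ^ 2 ∂μ)
          ≤ K * (T / N) ^ 2 := by
  obtain ⟨K, hgap⟩ := exists_integral_antitheticGap_le ⟨hf, hf1, hf2⟩ ⟨hg, hg1, hg2⟩ x₀ √(T / 2)
  refine ⟨CP ^ 2 * (K / 4), fun N hN Ω _ μ _ W Xf Xa Xc hW hmap hindep hf₀ ha₀ hc₀ hfm hfe ham hae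
    hcs => ?_⟩
  obtain ⟨s, hs, hsq⟩ : ∃ s > 0, s ^ 2 = T / N / 2 :=
    ⟨√(T / N / 2), by positivity, Real.sq_sqrt (by positivity)⟩
  have hdouble : 2 * s ^ 2 = T / N := by rw [hsq, mul_div_cancel₀ _ two_ne_zero]
  have hsS : s ≤ √(T / 2) := by
    rw [Real.le_sqrt' hs, hsq]
    gcongr
    exact div_le_self hT.le (Nat.one_le_cast.2 hN)
  have htotal : N * s ^ 2 = √(T / 2) ^ 2 := by
    rw [hsq, Real.sq_sqrt (by positivity)]
    field_simp
  have hpaths : AntitheticMilstein f g s x₀ μ W Xf Xa Xc := by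
    rw [← hsq] at hmap hfm hfe ham hae
    rw [← hdouble] at hcs
    exact ⟨hW, hmap, hindep, hf₀, ha₀, hc₀, hfm, hfe, ham, hae, hcs⟩
  have hvar := BoundedC2.integral_sq_gridAverage_le ⟨hP, hP1, hP2⟩ (Nat.one_le_iff_ne_zero.1 hN)
    (hgap hs hsS htotal.le hpaths)
  simp only [gridAverage_midpointInterpolation] at hvar
  exact hvar.trans_eq (by rw [← hdouble]; ring)
end

section
/- Let B_t be the Brownian bridge from a to b over [0,T] with volatility σ, and let U be a random variable uniformly distributed on (0,1). Then the random variable M = (1/2)( a + b − sqrt( (b − a)² − 2σ²T·log U ) ) has the same distribution as inf_{0 ≤ t ≤ T} B_t. -/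
open MeasureTheory ProbabilityTheory

/-!
Let `X` be a Brownian motion and `p ≥ 0`. Reflecting `X` at its first passage above `p` along a
finite grid preserves the law of `X_T`; by path continuity the overshoot vanishes as the grid is
refined, so `ℙ(sup X > p, X_T ∈ I)` is the `N(2p, T)`-measure of `I` for every `I` below `p`. On
`X_T = p - q` the path exceeds `p` exactly when the bridge `X_t - (t/T) X_T`, which is independent
of `X_T`, crosses the chord from `p` to `q`. Confining `X_T` to a small window around `p - q` and
comparing the densities of `N(2p, T)` and `N(0, T)` there, the crossing probability is
`exp(-2pq/T)`. For the bridge from `a` to `b` with volatility `σ` this gives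
`ℙ(inf B < m) = exp(-2(a - m)⁺(b - m)⁺/(σ²T))`, and solving for `m` yields the sampling formula.
-/

open Filter Set Topology
open scoped NNReal ENNReal

namespace BrownianBridge

section Exceedance

variable {Ω : Type*} {X : ℝ≥0 → Ω → ℝ} {f : ℝ≥0 → ℝ} {T : ℝ≥0}

/-- The event that `X` crosses strictly above the barrier `f` at some time in `[0, T]`. -/
def exceedance (X : ℝ≥0 → Ω → ℝ) (f : ℝ≥0 → ℝ) (T : ℝ≥0) : Set Ω :=
  {ω | ∃ t ≤ T, f t < X t ω}

lemma exceedance_anti {g : ℝ≥0 → ℝ} (h : f ≤ g) : exceedance X g T ⊆ exceedance X f T :=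
  fun _ ⟨t, ht, hlt⟩ => ⟨t, ht, (h t).trans_lt hlt⟩

lemma measurableSet_exceedance [MeasurableSpace Ω] (hm : ∀ t ≤ T, Measurable (X t))
    (hc : ∀ ω, Continuous fun t => X t ω) (hf : Continuous f) :
    MeasurableSet (exceedance X f T) := by
  obtain ⟨s, hs, hsd⟩ := TopologicalSpace.exists_countable_dense (Iic T)
  have hdense : exceedance X f T = ⋃ t ∈ s, {ω | f t < X t ω} := by
    ext ω
    simp only [exceedance, mem_iUnion, mem_ofPred_eq, exists_prop]
    refine ⟨fun ⟨t, ht, hlt⟩ => ?_, fun ⟨t, _, hlt⟩ => ⟨t, t.2, hlt⟩⟩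
    have hopen : IsOpen {t : Iic T | f t < X t ω} :=
      isOpen_lt (hf.comp continuous_subtype_val) ((hc ω).comp continuous_subtype_val)
    exact hsd.exists_mem_open hopen ⟨⟨t, ht⟩, hlt⟩
  rw [hdense]
  exact .biUnion hs fun t _ => measurableSet_lt measurable_const (hm t t.2)

end Exceedance

section Fiber

variable {Ω E ι : Type*} {mΩ : MeasurableSpace Ω} {mE : MeasurableSpace E} {μ : Measure Ω}

lemma identDistrib_of_measure_fiber {τ : Ω → ι} {Y : ι → Ω → E} {Z : Ω → E}
    (hcount : (range τ).Countable) (hτ : ∀ i, MeasurableSet (τ ⁻¹' {i}))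
    (hY : ∀ i, Measurable (Y i)) (hZ : Measurable Z)
    (h : ∀ i, ∀ s, MeasurableSet s →
      μ (τ ⁻¹' {i} ∩ Y i ⁻¹' s) = μ (τ ⁻¹' {i} ∩ Z ⁻¹' s)) :
    IdentDistrib (fun ω => Y (τ ω) ω) Z μ μ := by
  have hYτ : Measurable fun ω => Y (τ ω) ω := fun s hs => by
    have hcover : (fun ω => Y (τ ω) ω) ⁻¹' s = ⋃ i ∈ range τ, τ ⁻¹' {i} ∩ Y i ⁻¹' s := by
      ext ω
      simp [eq_comm]
    rw [hcover]
    exact .biUnion hcount fun i _ => (hτ i).inter (hY i hs)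
  have hsum (A : Set Ω) : μ A = ∑' i : range τ, μ (τ ⁻¹' {(i : ι)} ∩ A) := by
    simpa [Measure.restrict_apply (hτ _)] using
      (tsum_measure_preimage_singleton (μ := μ.restrict A) hcount fun i _ => hτ i).symm
  refine ⟨hYτ.aemeasurable, hZ.aemeasurable, Measure.ext fun s hs => ?_⟩
  rw [Measure.map_apply hYτ hs, Measure.map_apply hZ hs, hsum, hsum (Z ⁻¹' s)]
  refine tsum_congr fun i => ?_
  rw [← h i s hs]
  congr 1
  ext ω
  simp +contextual

end Fiber

section Reflection

variable {Ω : Type*} {mΩ : MeasurableSpace Ω} {μ : Measure Ω} {X : ℝ≥0 → Ω → ℝ} {T : ℝ≥0}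

lemma identDistrib_prodMk_reflect (hX : IsPreBrownianReal X μ) (hm : ∀ t, Measurable (X t))
    {s : ℝ≥0} (hs : s ≤ T) :
    IdentDistrib (fun ω => ((fun t : Iic s => X t ω), 2 * X s ω - X T ω))
      (fun ω => ((fun t : Iic s => X t ω), X T ω)) μ μ := by
  have := hX.isGaussianProcess.isProbabilityMeasure
  have hpast : Measurable fun ω (t : Iic s) => X t ω := measurable_pi_lambda _ fun t => hm t
  have hindep : IndepFun (fun ω (t : Iic s) => X t ω) (X T - X s) μ := by
    convert! (hX.indepFun_shift s).symm.comp measurable_id (measurable_pi_apply (T - s)) using 1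
    ext ω
    simp [add_tsub_cancel_of_le hs]
  have hsymm : IdentDistrib (-(X T - X s)) (X T - X s) μ μ := by
    have hneg := gaussianReal_neg (hX.hasLaw_sub T s)
    rw [neg_zero] at hneg
    exact hneg.identDistrib (hX.hasLaw_sub T s)
  have hpair := (IdentDistrib.refl hpast.aemeasurable).prodMk hsymm
    (hindep.comp measurable_id measurable_neg) hindep
  have hadd : Measurable fun x : (Iic s → ℝ) × ℝ => (x.1, x.1 ⟨s, self_mem_Iic⟩ + x.2) := by
    fun_prop
  convert! hpair.comp hadd using 2 with ω ω
  · simp only [Function.comp_apply, Pi.neg_apply, Pi.sub_apply, Prod.mk.injEq, true_and]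
    ring
  · simp

lemma identDistrib_reflect_stoppingTime (hX : IsPreBrownianReal X μ) (hm : ∀ t, Measurable (X t))
    {τ : Ω → ℝ≥0} (hτT : ∀ ω, τ ω ≤ T) (hcount : (range τ).Countable)
    (hτ : IsStoppingTime (Filtration.natural X fun t => (hm t).stronglyMeasurable)
      fun ω => (τ ω : WithTop ℝ≥0)) :
    IdentDistrib (fun ω => 2 * X (τ ω) ω - X T ω) (X T) μ μ := by
  have hpast (s : ℝ≥0) : ∃ A : Set (Iic s → ℝ), MeasurableSet A ∧
      (fun ω (t : Iic s) => X t ω) ⁻¹' A = τ ⁻¹' {s} := by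
    have hcount' : (range fun ω => (τ ω : WithTop ℝ≥0)).Countable := by
      simpa [← range_comp, Function.comp_def] using hcount.image ((↑) : ℝ≥0 → WithTop ℝ≥0)
    have hs := hτ.measurableSet_eq_of_countable_range hcount' s
    rw [Filtration.natural_eq_comap] at hs
    obtain ⟨A, hA, hAτ⟩ := hs
    exact ⟨A, hA, hAτ.trans <| ext fun ω => WithTop.coe_inj⟩
  refine identDistrib_of_measure_fiber (Y := fun s ω => 2 * X s ω - X T ω) hcount (fun s => ?_)
    (fun s => ((hm s).const_mul 2).sub (hm T)) (hm T) fun s I hI => ?_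
  · obtain ⟨A, hA, hAτ⟩ := hpast s
    exact hAτ ▸ measurable_pi_lambda _ (fun t : Iic s => hm t) hA
  · rcases (τ ⁻¹' {s}).eq_empty_or_nonempty with hs | ⟨ω, rfl⟩
    · simp [hs]
    · obtain ⟨A, hA, hAτ⟩ := hpast (τ ω)
      rw [← hAτ]
      exact (identDistrib_prodMk_reflect hX hm (hτT ω)).measure_mem_eq (hA.prod hI)

end Reflection

section GridPassage

variable {Ω : Type*} {X : ℝ≥0 → Ω → ℝ} {T : ℝ≥0} {p : ℝ} {ω : Ω}

/-- The `k`-th point of the uniform partition of `[0, T]` into `N` intervals, on which the first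
passage of a continuous path is approximated. -/
noncomputable def gridPoint (T : ℝ≥0) (N k : ℕ) : ℝ≥0 := k / N * T

lemma gridPoint_zero (T : ℝ≥0) (N : ℕ) : gridPoint T N 0 = 0 := by simp [gridPoint]

lemma dist_gridPoint_succ (T : ℝ≥0) (N k : ℕ) :
    dist (gridPoint T N (k + 1)) (gridPoint T N k) = T / N := by
  rw [NNReal.dist_eq, ← abs_of_nonneg (by positivity : (0 : ℝ) ≤ T / N)]
  congr 1
  simp only [gridPoint]
  push_cast
  ring

lemma gridPoint_mono (T : ℝ≥0) (N : ℕ) : Monotone (gridPoint T N) := fun j k h => by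
  unfold gridPoint
  gcongr

lemma gridPoint_le {N k : ℕ} (h : k ≤ N) : gridPoint T N k ≤ T :=
  mul_le_of_le_one_left' (div_le_one_of_le₀ (mod_cast h) (by positivity))

lemma tendsto_gridPoint_floor {t : ℝ≥0} (ht : t ≤ T) :
    Tendsto (fun N : ℕ => gridPoint T N ⌊t / T * N⌋₊) atTop (𝓝 t) := by
  rw [← NNReal.tendsto_coe]
  convert! ((tendsto_nat_floor_mul_div_atTop (NNReal.coe_nonneg (t / T))).comp
    tendsto_natCast_atTop_atTop).mul_const (T : ℝ)
  rw [← NNReal.coe_mul, div_mul_cancel_of_imp fun hT => le_antisymm (hT ▸ ht) zero_le]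

/-- The first grid point in `[0, T]` at which `X` exceeds the level `p`, or the last grid point if
there is none. -/
noncomputable def gridPassageTime (X : ℝ≥0 → Ω → ℝ) (T : ℝ≥0) (p : ℝ) (N : ℕ) (ω : Ω) : ℝ≥0 :=
  gridPoint T N (hittingBtwn (fun k => X (gridPoint T N k)) (Ioi p) 0 N ω)

lemma gridPassageTime_le (N : ℕ) (ω : Ω) : gridPassageTime X T p N ω ≤ T :=
  gridPoint_le (hittingBtwn_le ω)

lemma countable_range_gridPassageTime (N : ℕ) :
    (range (gridPassageTime X T p N)).Countable :=
  (countable_range (gridPoint T N)).mono (range_comp_subset_range _ _)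

lemma gridPassageTime_of_notMem_exceedance {N : ℕ} (hN : N ≠ 0)
    (h : ω ∉ exceedance X (fun _ => p) T) : gridPassageTime X T p N ω = T := by
  have hmiss : ¬ ∃ k ∈ Icc 0 N, X (gridPoint T N k) ω ∈ Ioi p :=
    fun ⟨k, hk, hlt⟩ => h ⟨_, gridPoint_le hk.2, hlt⟩
  rw [gridPassageTime, hittingBtwn, if_neg hmiss, gridPoint, div_self (mod_cast hN), one_mul]

lemma eventually_lt_gridPassageTime (hc : Continuous fun t => X t ω)
    (h : ω ∈ exceedance X (fun _ => p) T) :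
    ∀ᶠ N in atTop, p < X (gridPassageTime X T p N ω) ω := by
  obtain ⟨t, ht, hlt⟩ := h
  filter_upwards [((hc.tendsto t).comp (tendsto_gridPoint_floor ht)).eventually_const_lt hlt]
    with N hN
  have hfloor : ⌊t / T * N⌋₊ ≤ N :=
    Nat.floor_le_of_le (mul_le_of_le_one_left' (div_le_one_of_le₀ ht zero_le))
  exact hittingBtwn_mem_set (u := fun k => X (gridPoint T N k)) (s := Ioi p)
    ⟨_, ⟨zero_le, hfloor⟩, hN⟩

lemma tendsto_gridPassageTime (hc : Continuous fun t => X t ω)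
    (hp : X 0 ω ≤ p) (h : ω ∈ exceedance X (fun _ => p) T) :
    Tendsto (fun N => X (gridPassageTime X T p N ω) ω) atTop (𝓝 p) := by
  have huc : UniformContinuousOn (fun t => X t ω) (Icc 0 T) :=
    isCompact_Icc.uniformContinuousOn_of_continuous hc.continuousOn
  refine Metric.tendsto_nhds.2 fun ε hε => ?_
  obtain ⟨δ, hδ, hX⟩ := Metric.uniformContinuousOn_iff.1 huc ε hε
  filter_upwards [eventually_lt_gridPassageTime hc h,
    (tendsto_const_div_atTop_nhds_zero_nat (T : ℝ)).eventually_lt_const hδ] with N hhit hmesh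
  have hN := hittingBtwn_le (u := fun k => X (gridPoint T N k)) (s := Ioi p) (n := 0) (m := N) ω
  have hbefore (j : ℕ) := notMem_of_lt_hittingBtwn (u := fun k => X (gridPoint T N k))
    (s := Ioi p) (n := 0) (m := N) (ω := ω) (k := j)
  simp only [gridPassageTime] at hhit ⊢
  cases hk : hittingBtwn (fun k => X (gridPoint T N k)) (Ioi p) 0 N ω with
  | zero =>
    rw [hk, gridPoint_zero] at hhit
    exact absurd hp hhit.not_ge
  | succ j =>
    rw [hk] at hhit hN hbefore
    have hj : X (gridPoint T N j) ω ≤ p := not_lt.1 (hbefore j j.lt_succ_self zero_le)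
    have hosc := hX _ ⟨zero_le, gridPoint_le hN⟩ _ ⟨zero_le, gridPoint_le (by lia)⟩
      ((dist_gridPoint_succ T N j).trans_lt hmesh)
    rw [Real.dist_eq, abs_lt] at hosc ⊢
    constructor <;> linarith

lemma isStoppingTime_gridPassageTime [MeasurableSpace Ω] (hm : ∀ t, Measurable (X t)) (N : ℕ) :
    IsStoppingTime (Filtration.natural X fun t => (hm t).stronglyMeasurable)
      fun ω => (gridPassageTime X T p N ω : WithTop ℝ≥0) := by
  let ℱ := Filtration.natural X fun t => (hm t).stronglyMeasurable
  let 𝒢 : Filtration ℕ ‹MeasurableSpace Ω› :=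
    ⟨fun k => ℱ (gridPoint T N k), fun _ _ h => ℱ.mono (gridPoint_mono T N h), fun k => ℱ.le _⟩
  have hadapted : Adapted 𝒢 fun k => X (gridPoint T N k) := fun k =>
    (Filtration.stronglyAdapted_natural fun t => (hm t).stronglyMeasurable).adapted _
  have hhit (k : ℕ) : MeasurableSet[𝒢 k]
      {ω | hittingBtwn (fun k => X (gridPoint T N k)) (Ioi p) 0 N ω = k} := by
    simpa only [WithTop.coe_inj] using
      (hadapted.isStoppingTime_hittingBtwn measurableSet_Ioi).measurableSet_eq k
  intro t
  have hcover : {ω | (gridPassageTime X T p N ω : WithTop ℝ≥0) ≤ t} =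
      ⋃ k, ⋃ _ : gridPoint T N k ≤ t,
        {ω | hittingBtwn (fun k => X (gridPoint T N k)) (Ioi p) 0 N ω = k} := by
    ext ω
    simp only [gridPassageTime, mem_iUnion, mem_ofPred_eq, exists_prop, exists_eq_right']
    exact WithTop.coe_le_coe
  rw [hcover]
  exact .iUnion fun k => .iUnion fun hk => ℱ.mono hk _ (hhit k)

end GridPassage

section ReflectionPrinciple

variable {Ω : Type*} {mΩ : MeasurableSpace Ω} {μ : Measure Ω} {X : ℝ≥0 → Ω → ℝ} {T : ℝ≥0} {p : ℝ}

open scoped Classical in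
lemma identDistrib_piecewise_reflect (hX : IsPreBrownianReal X μ) (hm : ∀ t, Measurable (X t))
    (hc : ∀ ω, Continuous fun t => X t ω) (hp : 0 ≤ p) :
    IdentDistrib ((exceedance X (fun _ => p) T).piecewise (fun ω => 2 * p - X T ω) (X T)) (X T)
      μ μ := by
  have := hX.isGaussianProcess.isProbabilityMeasure
  let τ := gridPassageTime X T p
  have hident (N : ℕ) : IdentDistrib (fun ω => 2 * X (τ N ω) ω - X T ω) (X T) μ μ :=
    identDistrib_reflect_stoppingTime hX hm (gridPassageTime_le N)
      (countable_range_gridPassageTime N) (isStoppingTime_gridPassageTime hm N)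
  have hmeas : Measurable
      ((exceedance X (fun _ => p) T).piecewise (fun ω => 2 * p - X T ω) (X T)) :=
    (measurable_const.sub (hm T)).piecewise
      (measurableSet_exceedance (fun t _ => hm t) hc continuous_const) (hm T)
  have hlim : ∀ᵐ ω ∂μ, Tendsto (fun N => 2 * X (τ N ω) ω - X T ω) atTop
      (𝓝 ((exceedance X (fun _ => p) T).piecewise (fun ω => 2 * p - X T ω) (X T) ω)) := by
    filter_upwards [hX.eval_zero_ae_eq_zero] with ω hω
    by_cases h : ω ∈ exceedance X (fun _ => p) T
    · rw [piecewise_eq_of_mem _ _ _ h]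
      exact ((tendsto_gridPassageTime (hc ω) (hω.trans_le hp) h).const_mul 2).sub_const _
    · rw [piecewise_eq_of_notMem _ _ _ h]
      refine tendsto_const_nhds.congr' ?_
      filter_upwards [eventually_ne_atTop 0] with N hN
      simp only [τ, gridPassageTime_of_notMem_exceedance hN h]
      ring
  exact ⟨hmeas.aemeasurable, hX.aemeasurable T, tendstoInDistribution_unique _
    (tendstoInDistribution_of_ae_tendsto (fun N => (hident N).aemeasurable_fst)
      hmeas.aemeasurable hlim)
    (tendstoInDistribution_of_identDistrib 0 (fun N => (hident 0).trans (hident N).symm)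
      (hident 0))⟩

lemma measure_exceedance_const_inter (hX : IsPreBrownianReal X μ) (hm : ∀ t, Measurable (X t))
    (hc : ∀ ω, Continuous fun t => X t ω) (hp : 0 ≤ p) {I : Set ℝ} (hI : MeasurableSet I)
    (hIp : I ⊆ Iio p) :
    μ (exceedance X (fun _ => p) T ∩ X T ⁻¹' I) = gaussianReal (2 * p) T I := by
  classical
  have := hX.isGaussianProcess.isProbabilityMeasure
  set E := exceedance X (fun _ => p) T
  have hE : MeasurableSet E :=
    measurableSet_exceedance (fun t _ => hm t) hc continuous_const
  have hreflected : μ ((fun ω => 2 * p - X T ω) ⁻¹' I) = gaussianReal (2 * p) T I := by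
    have hlaw := gaussianReal_const_sub (hX.hasLaw_eval T) (2 * p)
    rw [sub_zero] at hlaw
    rw [← hlaw.map_eq, Measure.map_apply_of_aemeasurable hlaw.aemeasurable hI]
  have hsub : (fun ω => 2 * p - X T ω) ⁻¹' I ⊆ E := fun ω hω =>
    ⟨T, le_rfl, by linarith [mem_Iio.1 (hIp hω)]⟩
  have hpreimage : E.piecewise (fun ω => 2 * p - X T ω) (X T) ⁻¹' I
      = (fun ω => 2 * p - X T ω) ⁻¹' I ∪ X T ⁻¹' I \ E := by
    rw [piecewise_preimage, Set.ite, inter_eq_left.2 hsub]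
  have hdisj : Disjoint ((fun ω => 2 * p - X T ω) ⁻¹' I) (X T ⁻¹' I \ E) :=
    disjoint_sdiff_right.mono_left hsub
  have hsum : μ ((fun ω => 2 * p - X T ω) ⁻¹' I) + μ (X T ⁻¹' I \ E)
      = μ (X T ⁻¹' I ∩ E) + μ (X T ⁻¹' I \ E) := by
    rw [measure_inter_add_sdiff _ hE, ← measure_union hdisj ((hm T hI).diff hE), ← hpreimage]
    exact (identDistrib_piecewise_reflect hX hm hc hp).measure_mem_eq hI
  rw [inter_comm, ← hreflected]
  exact ((ENNReal.add_left_inj (measure_ne_top _ _)).1 hsum).symm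

end ReflectionPrinciple

section Bridge

variable {Ω : Type*} {X : ℝ≥0 → Ω → ℝ} {T : ℝ≥0} {p q : ℝ}

/-- The bridge from `0` to `0` over `[0, T]` obtained by pinning `X` at time `T`. -/
noncomputable def brownianBridge (X : ℝ≥0 → Ω → ℝ) (T t : ℝ≥0) (ω : Ω) : ℝ := X t ω - t / T * X T ω

/-- The affine function on `[0, T]` with value `p` at `0` and `q` at `T`, the barrier of the
crossing events. -/
noncomputable def chord (T : ℝ≥0) (p q : ℝ) (t : ℝ≥0) : ℝ := p + t / T * (q - p)

lemma chord_zero : chord T p q 0 = p := by simp [chord]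

lemma chord_self (hT : T ≠ 0) : chord T p q T = q := by
  simp [chord, hT]

lemma chord_mono_right : Monotone (chord T p) := fun q q' h t => by
  unfold chord
  gcongr

lemma continuous_chord : Continuous (chord T p q) := by
  unfold chord
  fun_prop

lemma mem_exceedance_const_iff {ω : Ω} : ω ∈ exceedance X (fun _ => p) T ↔
    ω ∈ exceedance (brownianBridge X T) (chord T p (p - X T ω)) T := by
  refine exists_congr fun t => and_congr_right fun _ => ?_
  unfold brownianBridge chord
  constructor <;> intro h <;> linarith

lemma exceedance_brownianBridge_inter_subset {q₁ q₂ : ℝ} :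
    exceedance (brownianBridge X T) (chord T p q₂) T ∩ X T ⁻¹' Ioo (p - q₂) (p - q₁)
      ⊆ exceedance X (fun _ => p) T ∩ X T ⁻¹' Ioo (p - q₂) (p - q₁) :=
  fun _ ⟨hcross, hlt, hgt⟩ => ⟨mem_exceedance_const_iff.2 <|
    exceedance_anti (chord_mono_right (by linarith)) hcross, hlt, hgt⟩

lemma exceedance_const_inter_subset {q₁ q₂ : ℝ} :
    exceedance X (fun _ => p) T ∩ X T ⁻¹' Ioo (p - q₂) (p - q₁)
      ⊆ exceedance (brownianBridge X T) (chord T p q₁) T ∩ X T ⁻¹' Ioo (p - q₂) (p - q₁) :=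
  fun _ ⟨hcross, hlt, hgt⟩ => ⟨exceedance_anti (chord_mono_right (by linarith)) <|
    mem_exceedance_const_iff.1 hcross, hlt, hgt⟩

variable {mΩ : MeasurableSpace Ω} {μ : Measure Ω}

lemma indepFun_brownianBridge (hX : IsPreBrownianReal X μ) (T : ℝ≥0) :
    IndepFun (fun ω (t : Iic T) => brownianBridge X T t ω) (X T) μ := by
  have := hX.isGaussianProcess.isProbabilityMeasure
  have hgauss : IsGaussianProcess
      (Sum.elim (fun t : Iic T => brownianBridge X T t) fun _ : Unit => X T) μ := by
    refine hX.isGaussianProcess.of_isGaussianProcess ?_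
    rintro (t | _)
    · refine ⟨{(t : ℝ≥0), T}, .proj ⟨t, by simp⟩ - ((t : ℝ≥0) / T : ℝ) • .proj ⟨T, by simp⟩, ?_⟩
      simp [brownianBridge]
    · exact ⟨{T}, .proj ⟨T, by simp⟩, by simp⟩
  have hcov (t : Iic T) : cov[brownianBridge X T t, X T; μ] = 0 := by
    have hL (s : ℝ≥0) := (hX.isGaussianProcess.hasGaussianLaw_eval s).memLp_two
    unfold brownianBridge
    rw [covariance_fun_sub_left (hL _) ((hL T).const_mul _) (hL T), covariance_const_mul_left,
      hX.covariance_eval, hX.covariance_eval, min_eq_left t.2, min_self]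
    rw [← NNReal.coe_div, ← NNReal.coe_mul,
      div_mul_cancel_of_imp fun hT => le_antisymm (hT ▸ t.2) zero_le, sub_self]
  have hindep := hgauss.indepFun_of_covariance_eq_zero
    (fun t => (hX.aemeasurable t).sub ((hX.aemeasurable T).const_mul _))
    (fun _ => hX.aemeasurable T) fun t _ => hcov t
  exact hindep.comp measurable_id (measurable_pi_apply ())

lemma measure_exceedance_brownianBridge_inter (hX : IsPreBrownianReal X μ)
    (hc : ∀ ω, Continuous fun t => X t ω) {f : ℝ≥0 → ℝ} (hf : Continuous f) {I : Set ℝ}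
    (hI : MeasurableSet I) :
    μ (exceedance (brownianBridge X T) f T ∩ X T ⁻¹' I)
      = μ (exceedance (brownianBridge X T) f T) * gaussianReal 0 T I := by
  have hpath (ω : Ω) : Continuous fun t => brownianBridge X T t ω := by
    have := hc ω
    unfold brownianBridge
    fun_prop
  have hpast : MeasurableSet[.comap (fun ω (t : Iic T) => brownianBridge X T t ω) inferInstance]
      (exceedance (brownianBridge X T) f T) :=
    @measurableSet_exceedance _ _ _ _ (.comap _ inferInstance) (fun t ht => Measurable.comp
      (g := fun x : Iic T → ℝ => x ⟨t, ht⟩) (measurable_pi_apply _) (comap_measurable _)) hpath hf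
  rw [(IndepFun_iff _ _ μ).1 (indepFun_brownianBridge hX T) _ _ hpast ⟨I, hI, rfl⟩,
    ← (hX.hasLaw_eval T).map_eq, Measure.map_apply_of_aemeasurable (hX.aemeasurable T) hI]

end Bridge

section GaussianShift

variable {m y z : ℝ} {v : ℝ≥0}

lemma gaussianReal_eq_withDensity_exp (m : ℝ) (hv : v ≠ 0) :
    gaussianReal m v =
      (gaussianReal 0 v).withDensity fun x => .ofReal (Real.exp ((m * x - m ^ 2 / 2) / v)) := by
  have hv' : (v : ℝ) ≠ 0 := mod_cast hv
  rw [gaussianReal_of_var_ne_zero _ hv, gaussianReal_of_var_ne_zero _ hv,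
    ← withDensity_mul _ (measurable_gaussianPDF 0 v) (by fun_prop)]
  congr 1
  ext x
  rw [Pi.mul_apply, gaussianPDF, gaussianPDF, ← ENNReal.ofReal_mul (gaussianPDFReal_nonneg 0 v x),
    gaussianPDFReal, gaussianPDFReal, mul_assoc (_)⁻¹, ← Real.exp_add]
  congr 3
  field_simp
  ring

lemma gaussianReal_Ioo_le (hv : v ≠ 0) (hm : 0 ≤ m) :
    gaussianReal m v (Ioo y z)
      ≤ .ofReal (Real.exp ((m * z - m ^ 2 / 2) / v)) * gaussianReal 0 v (Ioo y z) := by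
  rw [gaussianReal_eq_withDensity_exp m hv, withDensity_apply _ measurableSet_Ioo,
    ← setLIntegral_const]
  refine setLIntegral_mono' measurableSet_Ioo fun x hx => ?_
  gcongr
  exact hx.2.le

lemma le_gaussianReal_Ioo (hv : v ≠ 0) (hm : 0 ≤ m) :
    .ofReal (Real.exp ((m * y - m ^ 2 / 2) / v)) * gaussianReal 0 v (Ioo y z)
      ≤ gaussianReal m v (Ioo y z) := by
  rw [gaussianReal_eq_withDensity_exp m hv, withDensity_apply _ measurableSet_Ioo,
    ← setLIntegral_const]
  refine setLIntegral_mono' measurableSet_Ioo fun x hx => ?_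
  gcongr
  exact hx.1.le

lemma gaussianReal_Ioo_ne_zero (hv : v ≠ 0) (h : y < z) : gaussianReal m v (Ioo y z) ≠ 0 :=
  fun hzero => (isOpen_Ioo.measure_pos volume (nonempty_Ioo.2 h)).ne'
    (gaussianReal_absolutelyContinuous' m hv hzero)

end GaussianShift

lemma posPart_div {K : Type*} [Field K] [LinearOrder K] [IsStrictOrderedRing K] {x c : K}
    (hc : 0 ≤ c) : (x / c)⁺ = x⁺ / c := by
  rw [posPart_def, posPart_def, ← max_div_div_right hc, zero_div]

section CrossingProbability

variable {Ω : Type*} {mΩ : MeasurableSpace Ω} {μ : Measure Ω} {X : ℝ≥0 → Ω → ℝ} {T : ℝ≥0}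
  {p q : ℝ}

lemma measure_exceedance_chord_le {q₁ q₂ : ℝ} (hX : IsPreBrownianReal X μ)
    (hm : ∀ t, Measurable (X t)) (hc : ∀ ω, Continuous fun t => X t ω) (hT : T ≠ 0) (hp : 0 ≤ p)
    (hq₁ : 0 ≤ q₁) (hq : q₁ < q₂) :
    μ (exceedance (brownianBridge X T) (chord T p q₂) T)
      ≤ .ofReal (Real.exp (-2 * p * q₁ / T)) := by
  have hwindow : gaussianReal 0 T (Ioo (p - q₂) (p - q₁)) ≠ 0 :=
    gaussianReal_Ioo_ne_zero hT (by linarith)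
  rw [← ENNReal.mul_le_mul_iff_left hwindow (measure_ne_top _ _)]
  calc μ (exceedance (brownianBridge X T) (chord T p q₂) T)
        * gaussianReal 0 T (Ioo (p - q₂) (p - q₁))
      = μ (exceedance (brownianBridge X T) (chord T p q₂) T ∩ X T ⁻¹' Ioo (p - q₂) (p - q₁)) :=
        (measure_exceedance_brownianBridge_inter hX hc continuous_chord measurableSet_Ioo).symm
    _ ≤ μ (exceedance X (fun _ => p) T ∩ X T ⁻¹' Ioo (p - q₂) (p - q₁)) :=
        measure_mono exceedance_brownianBridge_inter_subset
    _ = gaussianReal (2 * p) T (Ioo (p - q₂) (p - q₁)) :=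
        measure_exceedance_const_inter hX hm hc hp measurableSet_Ioo
          fun x hx => hx.2.trans_le (by linarith)
    _ ≤ .ofReal (Real.exp ((2 * p * (p - q₁) - (2 * p) ^ 2 / 2) / T))
        * gaussianReal 0 T (Ioo (p - q₂) (p - q₁)) := gaussianReal_Ioo_le hT (by positivity)
    _ = .ofReal (Real.exp (-2 * p * q₁ / T)) * gaussianReal 0 T (Ioo (p - q₂) (p - q₁)) := by
        congr 4
        ring

lemma le_measure_exceedance_chord {q₁ q₂ : ℝ} (hX : IsPreBrownianReal X μ)
    (hm : ∀ t, Measurable (X t)) (hc : ∀ ω, Continuous fun t => X t ω) (hT : T ≠ 0) (hp : 0 ≤ p)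
    (hq₁ : 0 ≤ q₁) (hq : q₁ < q₂) :
    .ofReal (Real.exp (-2 * p * q₂ / T))
      ≤ μ (exceedance (brownianBridge X T) (chord T p q₁) T) := by
  have hwindow : gaussianReal 0 T (Ioo (p - q₂) (p - q₁)) ≠ 0 :=
    gaussianReal_Ioo_ne_zero hT (by linarith)
  rw [← ENNReal.mul_le_mul_iff_left hwindow (measure_ne_top _ _)]
  calc .ofReal (Real.exp (-2 * p * q₂ / T)) * gaussianReal 0 T (Ioo (p - q₂) (p - q₁))
      = .ofReal (Real.exp ((2 * p * (p - q₂) - (2 * p) ^ 2 / 2) / T))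
        * gaussianReal 0 T (Ioo (p - q₂) (p - q₁)) := by
        congr 4
        ring
    _ ≤ gaussianReal (2 * p) T (Ioo (p - q₂) (p - q₁)) := le_gaussianReal_Ioo hT (by positivity)
    _ = μ (exceedance X (fun _ => p) T ∩ X T ⁻¹' Ioo (p - q₂) (p - q₁)) :=
        (measure_exceedance_const_inter hX hm hc hp measurableSet_Ioo
          fun x hx => hx.2.trans_le (by linarith)).symm
    _ ≤ μ (exceedance (brownianBridge X T) (chord T p q₁) T ∩ X T ⁻¹' Ioo (p - q₂) (p - q₁)) :=
        measure_mono exceedance_const_inter_subset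
    _ = μ (exceedance (brownianBridge X T) (chord T p q₁) T)
        * gaussianReal 0 T (Ioo (p - q₂) (p - q₁)) :=
        measure_exceedance_brownianBridge_inter hX hc continuous_chord measurableSet_Ioo

lemma measure_exceedance_chord_of_nonneg (hX : IsPreBrownianReal X μ) (hm : ∀ t, Measurable (X t))
    (hc : ∀ ω, Continuous fun t => X t ω) (hT : T ≠ 0) (hp : 0 ≤ p) (hq : 0 ≤ q) :
    μ (exceedance (brownianBridge X T) (chord T p q) T) = .ofReal (Real.exp (-2 * p * q / T)) := by
  have := hX.isGaussianProcess.isProbabilityMeasure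
  have hlim (s : Set ℝ) : Tendsto (fun r => ENNReal.ofReal (Real.exp (-2 * p * r / T))) (𝓝[s] q)
      (𝓝 (.ofReal (Real.exp (-2 * p * q / T)))) :=
    (ENNReal.continuous_ofReal.comp (by fun_prop)).continuousWithinAt
  refine le_antisymm ?_ (le_of_tendsto (hlim (Ioi q)) ?_)
  · rcases hq.eq_or_lt with rfl | hq
    · simpa using prob_le_one
    · refine ge_of_tendsto (hlim (Iio q)) ?_
      filter_upwards [Ioo_mem_nhdsLT hq] with r hr
      exact measure_exceedance_chord_le hX hm hc hT hp hr.1.le hr.2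
  · filter_upwards [self_mem_nhdsWithin] with r hr
    exact le_measure_exceedance_chord hX hm hc hT hp hq hr

lemma measure_exceedance_chord (hX : IsPreBrownianReal X μ) (hm : ∀ t, Measurable (X t))
    (hc : ∀ ω, Continuous fun t => X t ω) (hT : T ≠ 0) (p q : ℝ) :
    μ (exceedance (brownianBridge X T) (chord T p q) T)
      = .ofReal (Real.exp (-2 * p⁺ * q⁺ / T)) := by
  have := hX.isGaussianProcess.isProbabilityMeasure
  rcases lt_or_ge p 0 with hp | hp
  · have hstart : ∀ᵐ ω ∂μ, ω ∈ exceedance (brownianBridge X T) (chord T p q) T := by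
      filter_upwards [hX.eval_zero_ae_eq_zero] with ω hω
      exact ⟨0, zero_le, by simpa [chord_zero, brownianBridge, hω] using hp⟩
    refine (measure_congr (eventuallyEq_univ.2 hstart)).trans ?_
    simp [posPart_of_nonpos hp.le]
  rcases lt_or_ge q 0 with hq | hq
  · have hend : exceedance (brownianBridge X T) (chord T p q) T = univ :=
      eq_univ_of_forall fun ω => ⟨T, le_rfl, by simpa [chord_self hT, brownianBridge, hT] using hq⟩
    simp [hend, posPart_of_nonpos hq.le]
  rw [posPart_of_nonneg hp, posPart_of_nonneg hq,
    measure_exceedance_chord_of_nonneg hX hm hc hT hp hq]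

lemma measure_exceedance_chord_const_mul_of_pos (hX : IsPreBrownianReal X μ)
    (hm : ∀ t, Measurable (X t)) (hc : ∀ ω, Continuous fun t => X t ω) (hT : T ≠ 0)
    {σ : ℝ} (hσ : 0 < σ) (p q : ℝ) :
    μ (exceedance (fun t ω => σ * brownianBridge X T t ω) (chord T p q) T)
      = .ofReal (Real.exp (-2 * p⁺ * q⁺ / (σ ^ 2 * T))) := by
  have hscale : exceedance (fun t ω => σ * brownianBridge X T t ω) (chord T p q) T
      = exceedance (brownianBridge X T) (chord T (p / σ) (q / σ)) T := by
    ext ω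
    refine exists_congr fun t => and_congr_right fun _ => ?_
    rw [← div_lt_iff₀' hσ]
    congr! 1
    simp only [chord]
    ring
  rw [hscale, measure_exceedance_chord hX hm hc hT, posPart_div hσ.le, posPart_div hσ.le]
  congr 2
  field_simp

lemma measure_exceedance_chord_const_mul (hX : IsPreBrownianReal X μ) (hm : ∀ t, Measurable (X t))
    (hc : ∀ ω, Continuous fun t => X t ω) (hT : T ≠ 0) {σ : ℝ} (hσ : σ ≠ 0) (p q : ℝ) :
    μ (exceedance (fun t ω => σ * brownianBridge X T t ω) (chord T p q) T)
      = .ofReal (Real.exp (-2 * p⁺ * q⁺ / (σ ^ 2 * T))) := by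
  rcases hσ.lt_or_gt with hσ | hσ
  · have hneg : (fun t ω => σ * brownianBridge X T t ω)
        = fun t ω => -σ * brownianBridge (-X) T t ω := by
      ext t ω
      simp only [brownianBridge, Pi.neg_apply]
      ring
    rw [hneg, measure_exceedance_chord_const_mul_of_pos hX.neg (fun t => (hm t).neg)
      (fun ω => (hc ω).neg) hT (neg_pos.2 hσ), neg_sq]
  · exact measure_exceedance_chord_const_mul_of_pos hX hm hc hT hσ p q

end CrossingProbability

section Infimum

variable {Ω : Type*} {W : ℝ → Ω → ℝ} {T : ℝ≥0} {σ a b m : ℝ}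

/-- The infimum over `[0, T]` of the Brownian bridge from `a` to `b` with volatility `σ` driven by
`W`. -/
noncomputable def bridgeInf (W : ℝ → Ω → ℝ) (T σ a b : ℝ) (ω : Ω) : ℝ :=
  sInf ((fun t => a + t / T * (b - a) + σ * (W t ω - t / T * W T ω)) '' Icc 0 T)

/-- The distribution function of `bridgeInf`: the probability that the infimum lies below `m`. -/
noncomputable def bridgeInfCDF (T σ a b m : ℝ) : ℝ :=
  Real.exp (-2 * (a - m)⁺ * (b - m)⁺ / (σ ^ 2 * T))

lemma bridgeInf_preimage_Iio (hc : ∀ ω, Continuous fun t => W t ω) :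
    bridgeInf W T σ a b ⁻¹' Iio m =
      exceedance (fun t ω => -σ * brownianBridge (fun t => W t) T t ω)
        (chord T (a - m) (b - m)) T := by
  ext ω
  have hpath : Continuous fun t => a + t / T * (b - a) + σ * (W t ω - t / T * W T ω) := by
    have := hc ω
    fun_prop
  rw [mem_preimage, mem_Iio, bridgeInf, csInf_lt_iff (isCompact_Icc.image hpath).bddBelow
    (nonempty_Icc.2 T.coe_nonneg |>.image _), exists_mem_image]
  simp only [exceedance, brownianBridge, chord, mem_ofPred_eq, NNReal.exists, mem_Icc,
    ← NNReal.coe_le_coe, NNReal.coe_mk, exists_prop, and_assoc]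
  refine exists_congr fun t => and_congr_right fun _ => and_congr_right fun _ => ?_
  constructor <;> intro h <;> linarith

variable [MeasurableSpace Ω] {μ : Measure Ω}

lemma measurable_bridgeInf (hm : ∀ t, Measurable (W t)) (hc : ∀ ω, Continuous fun t => W t ω) :
    Measurable (bridgeInf W T σ a b) := by
  refine measurable_of_Iio fun m => ?_
  rw [bridgeInf_preimage_Iio hc]
  refine measurableSet_exceedance (fun t _ => ?_) (fun ω => ?_) continuous_chord
  · unfold brownianBridge
    fun_prop
  · have := hc ω
    unfold brownianBridge
    fun_prop

lemma map_bridgeInf_Iio (hW : IsPreBrownianReal (fun t : ℝ≥0 => W t) μ)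
    (hm : ∀ t, Measurable (W t)) (hc : ∀ ω, Continuous fun t => W t ω) (hT : T ≠ 0) (hσ : σ ≠ 0)
    (m : ℝ) :
    μ.map (bridgeInf W T σ a b) (Iio m) = .ofReal (bridgeInfCDF T σ a b m) := by
  rw [Measure.map_apply (measurable_bridgeInf hm hc) measurableSet_Iio, bridgeInf_preimage_Iio hc,
    measure_exceedance_chord_const_mul hW (fun t => hm t)
      (fun ω => (hc ω).comp NNReal.continuous_coe) hT (neg_ne_zero.2 hσ), neg_sq, bridgeInfCDF]

end Infimum

section Quantile

variable {T σ a b m u : ℝ}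

/-- The quantile function of `bridgeInf`, inverse to `bridgeInfCDF`. -/
noncomputable def bridgeInfQuantile (T σ a b u : ℝ) : ℝ :=
  (1 / 2) * (a + b - √((b - a) ^ 2 - 2 * σ ^ 2 * T * Real.log u))

lemma measurable_bridgeInfQuantile : Measurable (bridgeInfQuantile T σ a b) := by
  unfold bridgeInfQuantile
  fun_prop

lemma add_lt_sqrt_sub_sq_add_iff {p q l : ℝ} (hl : 0 < l) :
    p + q < √((q - p) ^ 2 + l) ↔ 4 * (p⁺ * q⁺) < l := by
  have habs : |q - p| < √((q - p) ^ 2 + l) := by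
    rw [← Real.sqrt_sq_eq_abs]
    exact Real.sqrt_lt_sqrt (sq_nonneg _) (by linarith)
  obtain ⟨hlo, hhi⟩ := abs_lt.1 habs
  rcases lt_or_ge p 0 with hp | hp
  · exact iff_of_true (by linarith) (by simpa [posPart_of_nonpos hp.le] using hl)
  rcases lt_or_ge q 0 with hq | hq
  · exact iff_of_true (by linarith) (by simpa [posPart_of_nonpos hq.le] using hl)
  rw [posPart_of_nonneg hp, posPart_of_nonneg hq, Real.lt_sqrt (by positivity)]
  constructor <;> intro h <;> linarith

lemma bridgeInfQuantile_lt_iff (hT : 0 < T) (hσ : σ ≠ 0) (hu : u ∈ Ioo 0 1) :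
    bridgeInfQuantile T σ a b u < m ↔ u < bridgeInfCDF T σ a b m := by
  have hv : 0 < σ ^ 2 * T := by positivity
  have hl : 0 < -2 * (σ ^ 2 * T) * Real.log u := by
    nlinarith [mul_pos_of_neg_of_neg (neg_neg_of_pos hv) (Real.log_neg hu.1 hu.2)]
  calc bridgeInfQuantile T σ a b u < m
      ↔ (a - m) + (b - m)
          < √(((b - m) - (a - m)) ^ 2 + -2 * (σ ^ 2 * T) * Real.log u) := by
        rw [bridgeInfQuantile, sub_sub_sub_cancel_right, mul_assoc 2, mul_assoc (-2), neg_mul,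
          ← sub_eq_add_neg, mul_assoc 2]
        constructor <;> intro h <;> linarith
    _ ↔ 4 * ((a - m)⁺ * (b - m)⁺) < -2 * (σ ^ 2 * T) * Real.log u :=
        add_lt_sqrt_sub_sq_add_iff hl
    _ ↔ Real.log u < -2 * (a - m)⁺ * (b - m)⁺ / (σ ^ 2 * T) := by
        rw [lt_div_iff₀ hv]
        constructor <;> intro h <;> linarith
    _ ↔ u < bridgeInfCDF T σ a b m := Real.log_lt_iff_lt_exp hu.1

lemma bridgeInfCDF_le_one (hT : 0 ≤ T) : bridgeInfCDF T σ a b m ≤ 1 := by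
  refine Real.exp_le_one_iff.2 (div_nonpos_of_nonpos_of_nonneg ?_ (by positivity))
  have := mul_nonneg (posPart_nonneg (a - m)) (posPart_nonneg (b - m))
  linarith

variable {Ω : Type*} [MeasurableSpace Ω] {μ : Measure Ω} {U : Ω → ℝ}

lemma map_bridgeInfQuantile_Iio (hUm : Measurable U) (hU : μ.map U = volume.restrict (Ioo 0 1))
    (hT : 0 < T) (hσ : σ ≠ 0) (m : ℝ) :
    μ.map (fun ω => bridgeInfQuantile T σ a b (U ω)) (Iio m)
      = .ofReal (bridgeInfCDF T σ a b m) := by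
  have hpreimage : bridgeInfQuantile T σ a b ⁻¹' Iio m ∩ Ioo 0 1
      = Ioo 0 (bridgeInfCDF T σ a b m) := by
    ext u
    refine ⟨fun ⟨hlt, hu⟩ => ⟨hu.1, (bridgeInfQuantile_lt_iff hT hσ hu).1 hlt⟩, fun hu => ?_⟩
    have hu' : u ∈ Ioo 0 1 := ⟨hu.1, hu.2.trans_le (bridgeInfCDF_le_one hT.le)⟩
    exact ⟨(bridgeInfQuantile_lt_iff hT hσ hu').2 hu.2, hu'⟩
  have hmeas := measurable_bridgeInfQuantile (T := T) (σ := σ) (a := a) (b := b)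
  rw [← Function.comp_def, ← Measure.map_map hmeas hUm, hU, Measure.map_apply hmeas
    measurableSet_Iio, Measure.restrict_apply (hmeas measurableSet_Iio), hpreimage,
    Real.volume_Ioo, sub_zero]

end Quantile

lemma ext_of_Iio {α : Type*} [TopologicalSpace α] [MeasurableSpace α] [SecondCountableTopology α]
    [LinearOrder α] [OrderTopology α] [BorelSpace α] {μ ν : Measure α} [IsProbabilityMeasure μ]
    [IsProbabilityMeasure ν] (h : ∀ x, μ (Iio x) = ν (Iio x)) : μ = ν :=
  Measure.ext_of_Ici _ _ fun x => by
    rw [← compl_Iio, prob_compl_eq_one_sub measurableSet_Iio,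
      prob_compl_eq_one_sub measurableSet_Iio, h]

lemma hasIndepIncrements_of_nat {Ω ι E : Type*} [MeasurableSpace Ω] {μ : Measure Ω} [Preorder ι]
    [Sub E] [MeasurableSpace E] {X : ι → Ω → E}
    (h : ∀ (n : ℕ) (t : ℕ → ι), Monotone t →
      iIndepFun (fun (i : Fin n) ω => X (t (i + 1)) ω - X (t i) ω) μ) :
    HasIndepIncrements X μ := fun n t ht => by
  convert! h n (fun k => t (Fin.clamp k n)) fun j k hjk => ht (Fin.clamp_monotone hjk)
    using 3 with i ω
  congr <;> simp [Fin.ext_iff]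

lemma isPreBrownianReal_comp_coe {Ω : Type*} [MeasurableSpace Ω] {μ : Measure Ω} {W : ℝ → Ω → ℝ}
    (hlaw : ∀ t : ℝ≥0, HasLaw (W t) (gaussianReal 0 t) μ)
    (hindep : ∀ (n : ℕ) (t : ℕ → ℝ), Monotone t → (∀ i, 0 ≤ t i) →
      iIndepFun (fun (i : Fin n) ω => W (t (i + 1)) ω - W (t i) ω) μ) :
    IsPreBrownianReal (fun t : ℝ≥0 => W t) μ :=
  HasIndepIncrements.isPreBrownianReal_of_hasLaw hlaw <| hasIndepIncrements_of_nat fun n t ht =>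
    hindep n (fun k => t k) (NNReal.coe_mono.comp ht) fun k => (t k).coe_nonneg

end BrownianBridge

open BrownianBridge

/-- sampling the minimum of a Brownian bridge.
With `W` a standard scalar Brownian motion and `B t = a + (t/T)(b − a) + σ(W t − (t/T) W T)`
the Brownian bridge from `a` to `b` over `[0,T]` with volatility `σ`, and `U` uniformly
distributed on `(0,1)`, the random variable
`M = ½(a + b − √((b − a)² − 2σ²T log U))` has the same distribution as `inf_{0≤t≤T} B t`. -/
theorem brownian_bridge_min_sampling
    {Ω : Type*} [MeasurableSpace Ω] (μ : Measure Ω) [IsProbabilityMeasure μ]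
    (W : ℝ → Ω → ℝ)
    (hWmeas : ∀ t, Measurable (W t))
    (hW0 : ∀ ω, W 0 ω = 0)
    (hWcont : ∀ ω, Continuous fun t => W t ω)
    (hWgauss : ∀ s t : ℝ, 0 ≤ s → s ≤ t →
      μ.map (fun ω => W t ω - W s ω) = gaussianReal 0 (Real.toNNReal (t - s)))
    (hWindep : ∀ (n : ℕ) (ts : ℕ → ℝ), Monotone ts → (∀ i, 0 ≤ ts i) →
      iIndepFun
        (fun (i : Fin n) ω => W (ts (i + 1)) ω - W (ts i) ω) μ)
    (T σ a b : ℝ) (hT : 0 < T) (hσ : σ ≠ 0)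
    (U : Ω → ℝ) (hUmeas : Measurable U)
    (hU : μ.map U = volume.restrict (Set.Ioo (0 : ℝ) 1)) :
    μ.map (fun ω => (1 / 2) * (a + b - Real.sqrt ((b - a) ^ 2 - 2 * σ ^ 2 * T * Real.log (U ω))))
      = μ.map (fun ω =>
          sInf ((fun t => a + t / T * (b - a) + σ * (W t ω - t / T * W T ω)) '' Set.Icc 0 T)) := by
  lift T to ℝ≥0 using hT.le
  have hB : IsPreBrownianReal (fun t : ℝ≥0 => W t) μ := by
    refine isPreBrownianReal_comp_coe (fun t => ⟨(hWmeas t).aemeasurable, ?_⟩) hWindep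
    simpa [hW0] using hWgauss 0 t le_rfl t.2
  have hT' : T ≠ 0 := mod_cast hT.ne'
  change μ.map (fun ω => bridgeInfQuantile T σ a b (U ω)) = μ.map (bridgeInf W T σ a b)
  have hleft : Measurable fun ω => bridgeInfQuantile T σ a b (U ω) :=
    measurable_bridgeInfQuantile.comp hUmeas
  have := Measure.isProbabilityMeasure_map (μ := μ) hleft.aemeasurable
  have hright : Measurable (bridgeInf W T σ a b) := measurable_bridgeInf hWmeas hWcont
  have := Measure.isProbabilityMeasure_map (μ := μ) hright.aemeasurable
  refine ext_of_Iio fun m => ?_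
  rw [map_bridgeInfQuantile_Iio hUmeas hU hT hσ, map_bridgeInf_Iio hB hWmeas hWcont hT' hσ]
end
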